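/- arXiv:math/0610345 — 4 statements merged into one kernel-verified Lean document; each statement's English description precedes it below -/
import Mathlib

section
/- Let P be a Markov chain on a finite state space X with uniform stationary distribution and maximal hitting time H. Then for any subset Y ⊆ X and any starting state, with probability at least 1/2 the chain visits at least |Y|/2 distinct elements of Y by time 4H. -/
open Finset
open scoped Classical

namespace Paper

variable {X : Type} [Fintype X] [DecidableEq X]

/-- `P` is a stochastic matrix. -/
def IsStoch (P : Matrix X X ℝ) : Prop :=
  (∀ x y, 0 ≤ P x y) ∧ ∀ x, ∑ y, P x y = 1

/-- The uniform distribution is stationary for `P` (all columns sum to 1). -/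
def UnifStationary (P : Matrix X X ℝ) : Prop := ∀ y, ∑ x, P x y = 1

/-- Irreducibility of the chain. -/
def Irred (P : Matrix X X ℝ) : Prop := ∀ x y, ∃ n, 0 < (P ^ n) x y

/-- Probability of a trajectory `ω 0, ω 1, …, ω n` under initial distribution `μ`. -/
noncomputable def pathProb (P : Matrix X X ℝ) (μ : X → ℝ) {n : ℕ}
    (ω : Fin (n + 1) → X) : ℝ :=
  μ (ω 0) * ∏ i : Fin n, P (ω i.castSucc) (ω i.succ)

/-- Probability of an event determined by the trajectory up to time `n`. -/
noncomputable def prPath (P : Matrix X X ℝ) (μ : X → ℝ) (n : ℕ)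
    (E : (Fin (n + 1) → X) → Prop) : ℝ :=
  ∑ ω : Fin (n + 1) → X, if E ω then pathProb P μ ω else 0

/-- Expectation of a functional of the trajectory up to time `n`. -/
noncomputable def expPath (P : Matrix X X ℝ) (μ : X → ℝ) (n : ℕ)
    (f : (Fin (n + 1) → X) → ℝ) : ℝ :=
  ∑ ω : Fin (n + 1) → X, pathProb P μ ω * f ω

/-- Point mass at `x`. -/
def delta (x : X) : X → ℝ := fun z => if z = x then 1 else 0

/-- Expected hitting time `E_x[T_y]`, via `E[T] = ∑_{n ≥ 0} Pr(T > n)`. -/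
noncomputable def hitExp (P : Matrix X X ℝ) (x y : X) : ℝ :=
  (∑' n : ℕ, ENNReal.ofReal (prPath P (delta x) n (fun ω => ∀ i, ω i ≠ y))).toReal

/-- Maximal expected hitting time `H = max_{x,y} E_x[T_y]`. -/
noncomputable def maxHit (P : Matrix X X ℝ) : ℝ := ⨆ x, ⨆ y, hitExp P x y

/-- Relaxation time: `max 1/(1-|λ|)` over nontrivial eigenvalues `λ` of `P`. -/
noncomputable def Trel (P : Matrix X X ℝ) : ℝ :=
  sSup ((fun l : ℝ => 1 / (1 - |l|)) '' (spectrum ℝ P \ {1}))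

/-- The set of states not visited by the trajectory `ω` (up to its time horizon). -/
noncomputable def unvisited {n : ℕ} (ω : Fin (n + 1) → X) : Finset X :=
  Finset.univ.filter fun x => ∀ i, ω i ≠ x

/-- `Pr_x(T⁺_x ≥ s)`: the chain started at `x` does not return to `x`
at any time `i` with `1 ≤ i < s`. -/
noncomputable def prReturnGE (P : Matrix X X ℝ) (x : X) (s : ℝ) : ℝ :=
  prPath P (delta x) ⌈s⌉₊
    (fun ω => ∀ i : Fin (⌈s⌉₊ + 1), 1 ≤ (i : ℕ) → ((i : ℕ) : ℝ) < s → ω i ≠ x)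

/-- Separation distance at time `n` from state `x`. -/
noncomputable def sep (P : Matrix X X ℝ) (pi : X → ℝ) (x : X) (n : ℕ) : ℝ :=
  ⨆ y, (1 - (P ^ n) x y / pi y)

/-- Relative entropy `D(μ ‖ pi)` (with `0 log 0 = 0`). -/
noncomputable def relEnt (μ pi : X → ℝ) : ℝ := ∑ x, μ x * Real.log (μ x / pi x)

/-- Total variation distance `d_tv(μ, pi) = ∑_{y : μ y < pi y} (pi y - μ y)`. -/
noncomputable def dtv (μ pi : X → ℝ) : ℝ :=
  ∑ y ∈ Finset.univ.filter (fun y => μ y < pi y), (pi y - μ y)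

/-- Entropy decay (mixing) time. -/
noncomputable def tauEnt (P : Matrix X X ℝ) (pi : X → ℝ) (ε : ℝ) : ℕ :=
  sInf {n' | ∀ n ≥ n', ∀ x, relEnt ((P ^ n) x) pi ≤ ε}

/-- Separation mixing time. -/
noncomputable def tauSep (P : Matrix X X ℝ) (pi : X → ℝ) (ε : ℝ) : ℕ :=
  sInf {n' | ∀ n ≥ n', ∀ x, sep P pi x n ≤ ε}

/-- Total variation mixing time. -/
noncomputable def tauTV (P : Matrix X X ℝ) (pi : X → ℝ) (ε : ℝ) : ℕ :=
  sInf {n' | ∀ n ≥ n', ∀ x, dtv ((P ^ n) x) pi ≤ ε}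

/-- `L²(pi)` distance of `Pᵗ(x,·)` from `pi`. -/
noncomputable def chiDist (P : Matrix X X ℝ) (pi : X → ℝ) (t : ℕ) (x : X) : ℝ :=
  Real.sqrt (∑ y, ((P ^ t) x y / pi y - 1) ^ 2 * pi y)

/-- `L²` mixing time. -/
noncomputable def tau2 (P : Matrix X X ℝ) (pi : X → ℝ) : ℕ :=
  sInf {t | ∀ x, chiDist P pi t x ≤ 1 / 4}

/-- Uniform distribution on a finite type. -/
noncomputable def unif (Y : Type) [Fintype Y] : Y → ℝ := fun _ => (Fintype.card Y : ℝ)⁻¹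

/-- The `m`-state lamplighter chain over a base chain `Pb`:
the lamp at the current position is randomized, the lamplighter moves one step
of the base chain, and the lamp at the new position is randomized. -/
noncomputable def lampChain {V : Type} [Fintype V] [DecidableEq V]
    (Pb : Matrix V V ℝ) (m : ℕ) :
    Matrix ((V → Fin m) × V) ((V → Fin m) × V) ℝ :=
  fun p q =>
    if ∀ z, z ≠ p.2 → z ≠ q.2 → q.1 z = p.1 z then
      Pb p.2 q.2 * ((m : ℝ)⁻¹) ^ (({p.2, q.2} : Finset V).card)
    else 0

/-- Simple random walk on a `d`-regular graph. -/
noncomputable def srw {V : Type} [Fintype V] [DecidableEq V]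
    (G : SimpleGraph V) (d : ℕ) : Matrix V V ℝ :=
  fun x y => if G.Adj x y then (d : ℝ)⁻¹ else 0

/-!
If the chain avoids `y` up to time `n` with probability at most `q < 1` from every state, then by
the Markov property avoiding it for `n` further steps always costs another factor `q`.
Irreducibility provides such `n` and `q`, so hitting times have geometric tails and finite means.
As `Pr(T_y > n)` is antitone in `n`, we have `(n + 1) Pr(T_y > n) ≤ E[T_y] ≤ H`, so at time
`⌈c H⌉` each state is unvisited with probability at most `1 / c`. The expected number of unvisited
elements of `Y` is then at most `|Y| / c`, and Markov's inequality bounds the probability that this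
number is large.
-/

section Trajectories

omit [DecidableEq X]

variable {P : Matrix X X ℝ} {μ : X → ℝ} {n : ℕ}

lemma pathProb_nonneg (hP : IsStoch P) (hμ : ∀ x, 0 ≤ μ x) (ω : Fin (n + 1) → X) :
    0 ≤ pathProb P μ ω :=
  mul_nonneg (hμ _) (prod_nonneg fun _ _ => hP.1 _ _)

omit [Fintype X] in
lemma pathProb_cons (P : Matrix X X ℝ) (μ : X → ℝ) (x : X) (ω : Fin (n + 1) → X) :
    pathProb P μ (Fin.cons x ω : Fin (n + 2) → X) = μ x * pathProb P (P.row x) ω := by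
  simp [pathProb, Fin.prod_univ_succ]

lemma sum_eq_sum_sum_cons {M : Type*} [AddCommMonoid M] (f : (Fin (n + 1) → X) → M) :
    ∑ ω, f ω = ∑ x, ∑ ω : Fin n → X, f (Fin.cons x ω) := by
  rw [← (Fin.consEquiv fun _ : Fin (n + 1) => X).sum_comp, Fintype.sum_prod_type]
  rfl

lemma sum_pathProb (hP : IsStoch P) (μ : X → ℝ) (n : ℕ) :
    ∑ ω : Fin (n + 1) → X, pathProb P μ ω = ∑ x, μ x := by
  induction n generalizing μ with
  | zero => simp [sum_eq_sum_sum_cons, pathProb]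
  | succ n ih =>
    rw [sum_eq_sum_sum_cons]
    simp_rw [pathProb_cons, ← mul_sum, ih, Matrix.row_apply, hP.2, mul_one]

lemma prPath_nonneg (hP : IsStoch P) (hμ : ∀ x, 0 ≤ μ x) (E : (Fin (n + 1) → X) → Prop) :
    0 ≤ prPath P μ n E :=
  sum_nonneg fun ω _ => ite_nonneg (pathProb_nonneg hP hμ ω) le_rfl

lemma prPath_add_prPath_not (hP : IsStoch P) (μ : X → ℝ) (E : (Fin (n + 1) → X) → Prop) :
    prPath P μ n E + prPath P μ n (fun ω => ¬ E ω) = ∑ x, μ x := by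
  rw [← sum_pathProb hP μ n, prPath, prPath, ← sum_add_distrib]
  refine sum_congr rfl fun ω _ => ?_
  by_cases hω : E ω <;> simp [hω]

lemma prPath_le_sum (hP : IsStoch P) (hμ : ∀ x, 0 ≤ μ x) (E : (Fin (n + 1) → X) → Prop) :
    prPath P μ n E ≤ ∑ x, μ x := by
  rw [← prPath_add_prPath_not hP μ E]
  exact le_add_of_nonneg_right (prPath_nonneg hP hμ _)

lemma mul_prPath_le_expPath (hP : IsStoch P) (hμ : ∀ x, 0 ≤ μ x) {E : (Fin (n + 1) → X) → Prop}
    {f : (Fin (n + 1) → X) → ℝ} {a : ℝ} (hf : ∀ ω, 0 ≤ f ω) (ha : ∀ ω, E ω → a ≤ f ω) :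
    a * prPath P μ n E ≤ expPath P μ n f := by
  rw [prPath, expPath, mul_sum]
  refine sum_le_sum fun ω _ => ?_
  split_ifs with hω
  · rw [mul_comm]
    exact mul_le_mul_of_nonneg_left (ha ω hω) (pathProb_nonneg hP hμ ω)
  · rw [mul_zero]
    exact mul_nonneg (pathProb_nonneg hP hμ ω) (hf ω)

end Trajectories

omit [Fintype X] in
lemma delta_nonneg (x z : X) : 0 ≤ delta x z :=
  ite_nonneg zero_le_one le_rfl

lemma sum_delta (x : X) : ∑ z, delta x z = 1 := by
  simp [delta]

section FirstStep

variable (P : Matrix X X ℝ) {n : ℕ}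

lemma prPath_delta_zero (x : X) (E : (Fin 1 → X) → Prop) :
    prPath P (delta x) 0 E = if E (fun _ => x) then 1 else 0 := by
  rw [prPath, ← (Equiv.funUnique (Fin 1) X).symm.sum_comp, sum_eq_single x]
  · simp [pathProb, delta, show (Equiv.funUnique (Fin 1) X).symm x = fun _ => x from rfl]
  · intro z _ hz
    simp [pathProb, delta, hz]
  · simp

lemma prPath_delta_succ (x : X) (E : (Fin (n + 2) → X) → Prop) :
    prPath P (delta x) (n + 1) E = prPath P (P.row x) n (fun ω => E (Fin.cons x ω)) := by
  simp_rw [prPath, sum_eq_sum_sum_cons (n := n + 1), pathProb_cons]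
  rw [sum_eq_single x]
  · simp [delta]
  · intro z _ hz
    simp [delta, hz]
  · simp

lemma prPath_eq_sum_mul_prPath_delta (μ : X → ℝ) (E : (Fin (n + 1) → X) → Prop) :
    prPath P μ n E = ∑ x, μ x * prPath P (delta x) n E := by
  simp_rw [prPath, mul_sum]
  rw [sum_comm]
  refine sum_congr rfl fun ω _ => ?_
  split_ifs <;> simp [pathProb, delta]

end FirstStep

lemma expPath_card_inter_unvisited (P : Matrix X X ℝ) (μ : X → ℝ) (n : ℕ) (Y : Finset X) :
    expPath P μ n (fun ω => (#(Y ∩ unvisited ω) : ℝ)) =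
      ∑ y ∈ Y, prPath P μ n (fun ω => ∀ i, ω i ≠ y) := by
  have card_eq_sum (ω : Fin (n + 1) → X) :
      (#(Y ∩ unvisited ω) : ℝ) = ∑ y ∈ Y, if ∀ i, ω i ≠ y then 1 else 0 := by
    simp [unvisited, ← filter_mem_eq_inter]
  simp_rw [expPath, prPath, card_eq_sum, mul_sum, mul_ite, mul_one, mul_zero]
  rw [sum_comm]
  -- Only the decidability instances differ.
  congr!

lemma card_visited_add_card_unvisited (Y : Finset X) {n : ℕ} (ω : Fin (n + 1) → X) :
    #{y ∈ Y | ∃ i, ω i = y} + #(Y ∩ unvisited ω) = #Y := by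
  rw [← card_filter_add_card_filter_not (s := Y) (fun y => ∃ i, ω i = y)]
  simp [unvisited, ← filter_mem_eq_inter]

/-- The probability that the chain started at `x` does not visit `y` at any of the times
`0, …, n`, that is, `Pr_x(T_y > n)`. -/
noncomputable def avoidProb (P : Matrix X X ℝ) (y : X) (n : ℕ) (x : X) : ℝ :=
  prPath P (delta x) n (fun ω => ∀ i, ω i ≠ y)

section AvoidProb

variable {P : Matrix X X ℝ}

lemma avoidProb_zero (P : Matrix X X ℝ) (x y : X) :
    avoidProb P y 0 x = if x = y then 0 else 1 := by
  simp [avoidProb, prPath_delta_zero]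

lemma avoidProb_self (P : Matrix X X ℝ) (y : X) (n : ℕ) : avoidProb P y n y = 0 := by
  refine sum_eq_zero fun ω _ => ?_
  split_ifs with hω
  · simp [pathProb, delta, hω 0]
  · rfl

lemma avoidProb_succ_of_ne (P : Matrix X X ℝ) {x y : X} (hxy : x ≠ y) (n : ℕ) :
    avoidProb P y (n + 1) x = ∑ z, P x z * avoidProb P y n z := by
  simp [avoidProb, prPath_delta_succ, Fin.forall_fin_succ (n := n + 1), hxy,
    prPath_eq_sum_mul_prPath_delta P (P.row x)]

lemma avoidProb_nonneg (hP : IsStoch P) (y : X) (n : ℕ) (x : X) : 0 ≤ avoidProb P y n x :=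
  prPath_nonneg hP (delta_nonneg x) _

lemma avoidProb_le_one (hP : IsStoch P) (y : X) (n : ℕ) (x : X) : avoidProb P y n x ≤ 1 :=
  (prPath_le_sum hP (delta_nonneg x) _).trans_eq (sum_delta x)

lemma avoidProb_add_le (hP : IsStoch P) {y : X} {n : ℕ} {c : ℝ}
    (hc : ∀ z, avoidProb P y n z ≤ c) (m : ℕ) (x : X) :
    avoidProb P y (m + n) x ≤ c * avoidProb P y m x := by
  induction m generalizing x with
  | zero =>
    rcases eq_or_ne x y with rfl | hxy
    · simp [avoidProb_self]
    · simpa [avoidProb_zero, hxy] using hc x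
  | succ m ih =>
    rcases eq_or_ne x y with rfl | hxy
    · simp [avoidProb_self]
    · rw [Nat.add_right_comm, avoidProb_succ_of_ne P hxy, avoidProb_succ_of_ne P hxy, mul_sum]
      refine sum_le_sum fun z _ => ?_
      rw [mul_left_comm]
      exact mul_le_mul_of_nonneg_left (ih z) (hP.1 x z)

lemma antitone_avoidProb (hP : IsStoch P) (x y : X) : Antitone fun n => avoidProb P y n x :=
  antitone_nat_of_succ_le fun n => by
    simpa using avoidProb_add_le hP (avoidProb_le_one hP y 1) n x

lemma avoidProb_le_one_sub_pow (hP : IsStoch P) (y : X) (n : ℕ) (x : X) :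
    avoidProb P y n x ≤ 1 - (P ^ n) x y := by
  induction n generalizing x with
  | zero => rcases eq_or_ne x y with rfl | hxy <;> simp [avoidProb_zero, *]
  | succ n ih =>
    have sum_le : ∑ z, P x z * avoidProb P y n z ≤ 1 - (P ^ (n + 1)) x y := calc
      _ ≤ ∑ z, P x z * (1 - (P ^ n) z y) :=
        sum_le_sum fun z _ => mul_le_mul_of_nonneg_left (ih z) (hP.1 x z)
      _ = 1 - (P ^ (n + 1)) x y := by
        simp only [mul_sub, mul_one, sum_sub_distrib, hP.2, pow_succ', Matrix.mul_apply]
    rcases eq_or_ne x y with rfl | hxy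
    · rw [avoidProb_self]
      exact (sum_nonneg fun z _ => mul_nonneg (hP.1 x z) (avoidProb_nonneg hP _ n z)).trans sum_le
    · rwa [avoidProb_succ_of_ne P hxy]

lemma exists_forall_avoidProb_le (hP : IsStoch P) (hirr : Irred P) (y : X) :
    ∃ n, ∃ c < 1, ∀ x, avoidProb P y n x ≤ c := by
  choose time time_pos using fun x => hirr x y
  let n := univ.sup time
  have lt_one (x : X) : avoidProb P y n x < 1 := calc
    avoidProb P y n x ≤ avoidProb P y (time x) x :=
      antitone_avoidProb hP x y (le_sup (mem_univ x))
    _ ≤ 1 - (P ^ time x) x y := avoidProb_le_one_sub_pow hP y (time x) x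
    _ < 1 := sub_lt_self 1 (time_pos x)
  obtain ⟨x₀, -, hx₀⟩ := exists_max_image univ (avoidProb P y n) ⟨y, mem_univ y⟩
  exact ⟨n, avoidProb P y n x₀, lt_one x₀, fun x => hx₀ x (mem_univ x)⟩

end AvoidProb

lemma summable_of_add_le_mul {a : ℕ → ℝ} (ha : ∀ m, 0 ≤ a m) {n : ℕ} {c : ℝ} (hc : c < 1)
    (hac : ∀ m, a (m + n) ≤ c * a m) : Summable a := by
  refine summable_of_sum_range_le (c := (∑ m ∈ range n, a m) / (1 - c)) ha fun k => ?_
  rw [le_div_iff₀ (sub_pos.2 hc)]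
  have sum_le : ∑ m ∈ range k, a m ≤ ∑ m ∈ range n, a m + c * ∑ m ∈ range k, a m := calc
    ∑ m ∈ range k, a m ≤ ∑ m ∈ range (n + k), a m :=
      sum_le_sum_of_subset_of_nonneg (range_mono (Nat.le_add_left k n)) fun m _ _ => ha m
    _ = ∑ m ∈ range n, a m + ∑ m ∈ range k, a (m + n) := by
      simp_rw [sum_range_add, add_comm n]
    _ ≤ ∑ m ∈ range n, a m + c * ∑ m ∈ range k, a m := by
      rw [mul_sum]
      gcongr with m
      exact hac m
  linarith

section HittingTime

variable {P : Matrix X X ℝ}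

lemma summable_avoidProb (hP : IsStoch P) (hirr : Irred P) (x y : X) :
    Summable fun n => avoidProb P y n x := by
  obtain ⟨n, c, hc, avoid_le⟩ := exists_forall_avoidProb_le hP hirr y
  exact summable_of_add_le_mul (fun m => avoidProb_nonneg hP y m x) hc
    fun m => avoidProb_add_le hP avoid_le m x

lemma hitExp_eq_tsum_avoidProb (hP : IsStoch P) (hirr : Irred P) (x y : X) :
    hitExp P x y = ∑' n, avoidProb P y n x := by
  have nonneg (n : ℕ) : 0 ≤ avoidProb P y n x := avoidProb_nonneg hP y n x
  change (∑' n, ENNReal.ofReal (avoidProb P y n x)).toReal = _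
  rw [← ENNReal.ofReal_tsum_of_nonneg nonneg (summable_avoidProb hP hirr x y),
    ENNReal.toReal_ofReal (tsum_nonneg nonneg)]

lemma succ_mul_avoidProb_le_hitExp (hP : IsStoch P) (hirr : Irred P) (x y : X) (n : ℕ) :
    (n + 1 : ℝ) * avoidProb P y n x ≤ hitExp P x y := calc
  (n + 1 : ℝ) * avoidProb P y n x = ∑ _m ∈ range (n + 1), avoidProb P y n x := by simp
  _ ≤ ∑ m ∈ range (n + 1), avoidProb P y m x :=
    sum_le_sum fun _ hm => antitone_avoidProb hP x y (mem_range_succ_iff.1 hm)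
  _ ≤ ∑' m, avoidProb P y m x :=
    (summable_avoidProb hP hirr x y).sum_le_tsum _ fun m _ => avoidProb_nonneg hP y m x
  _ = hitExp P x y := (hitExp_eq_tsum_avoidProb hP hirr x y).symm

lemma hitExp_le_maxHit (P : Matrix X X ℝ) (x y : X) : hitExp P x y ≤ maxHit P :=
  (le_ciSup (Set.finite_range fun y => hitExp P x y).bddAbove y).trans
    (le_ciSup (Set.finite_range fun x => ⨆ y, hitExp P x y).bddAbove x)

lemma avoidProb_ceil_mul_maxHit_le (hP : IsStoch P) (hirr : Irred P) {c : ℝ} (hc : 0 < c)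
    (x y : X) : avoidProb P y ⌈c * maxHit P⌉₊ x ≤ 1 / c := by
  set n := ⌈c * maxHit P⌉₊
  have mul_le : (n + 1 : ℝ) * (avoidProb P y n x * c) ≤ (n + 1) * 1 := calc
    (n + 1 : ℝ) * (avoidProb P y n x * c) = c * ((n + 1) * avoidProb P y n x) := by ring
    _ ≤ c * maxHit P := by
      gcongr
      exact (succ_mul_avoidProb_le_hitExp hP hirr x y n).trans (hitExp_le_maxHit P x y)
    _ ≤ (n + 1) * 1 := by linarith [Nat.le_ceil (c * maxHit P)]
  rw [le_div_iff₀ hc]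
  exact le_of_mul_le_mul_left mul_le n.cast_add_one_pos

lemma expPath_card_inter_unvisited_le (hP : IsStoch P) (hirr : Irred P) {c : ℝ} (hc : 0 < c)
    (Y : Finset X) (x : X) :
    expPath P (delta x) ⌈c * maxHit P⌉₊ (fun ω => (#(Y ∩ unvisited ω) : ℝ)) ≤ #Y / c := by
  rw [expPath_card_inter_unvisited]
  calc ∑ y ∈ Y, avoidProb P y ⌈c * maxHit P⌉₊ x
    _ ≤ ∑ _y ∈ Y, 1 / c := sum_le_sum fun y _ => avoidProb_ceil_mul_maxHit_le hP hirr hc x y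
    _ = #Y / c := by simp [div_eq_mul_inv]

lemma prPath_card_visited_lt_le (hP : IsStoch P) (hirr : Irred P) {c θ : ℝ} (hc : 0 < c)
    (hθ : θ < 1) (Y : Finset X) (x : X) :
    prPath P (delta x) ⌈c * maxHit P⌉₊
      (fun ω => #{y ∈ Y | ∃ i, ω i = y} < #Y * θ) ≤ 1 / (c * (1 - θ)) := by
  have hθ' : 0 < 1 - θ := sub_pos.2 hθ
  rcases Y.eq_empty_or_nonempty with rfl | hY
  · simpa [prPath] using by positivity
  have card_pos : (0 : ℝ) < #Y := mod_cast hY.card_pos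
  have unvisited_ge (ω : Fin (⌈c * maxHit P⌉₊ + 1) → X)
      (hω : #{y ∈ Y | ∃ i, ω i = y} < #Y * θ) : #Y * (1 - θ) ≤ (#(Y ∩ unvisited ω) : ℝ) := by
    have card_add : (#{y ∈ Y | ∃ i, ω i = y} + #(Y ∩ unvisited ω) : ℝ) = #Y :=
      mod_cast card_visited_add_card_unvisited Y ω
    linarith
  have markov := (mul_prPath_le_expPath hP (delta_nonneg x) (fun ω => Nat.cast_nonneg _)
    unvisited_ge).trans (expPath_card_inter_unvisited_le hP hirr hc Y x)
  rw [mul_assoc, div_eq_mul_one_div, mul_le_mul_iff_right₀ card_pos] at markov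
  rwa [← div_div, le_div_iff₀' hθ']

end HittingTime

theorem visit_half_by_four_hitting_general {P : Matrix X X ℝ} (hP : IsStoch P) (hirr : Irred P)
    {c θ : ℝ} (hc : 0 < c) (hθ : θ < 1) (Y : Finset X) (x : X) :
    1 - 1 / (c * (1 - θ)) ≤
      prPath P (delta x) ⌈c * maxHit P⌉₊ (fun ω => #Y * θ ≤ #{y ∈ Y | ∃ i, ω i = y}) := by
  have add_not := prPath_add_prPath_not hP (delta x)
    (n := ⌈c * maxHit P⌉₊) (fun ω => #Y * θ ≤ #{y ∈ Y | ∃ i, ω i = y})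
  simp only [not_le] at add_not
  linarith [prPath_card_visited_lt_le hP hirr hc hθ Y x, sum_delta x]

/-- For a chain with uniform stationary distribution and maximal
hitting time `H`, from any starting state, with probability at least `1/2` the
chain visits at least `|Y|/2` distinct elements of `Y` by time `4H`. -/
theorem visit_half_by_four_hitting
    (X : Type) [Fintype X] [DecidableEq X] [Nonempty X]
    (P : Matrix X X ℝ)
    (hP : IsStoch P) (hu : UnifStationary P) (hirr : Irred P)
    (Y : Finset X) (x : X) :
    1 / 2 ≤
      prPath P (delta x) ⌈4 * maxHit P⌉₊
        (fun ω => (Y.card : ℝ) / 2 ≤ ((Y.filter fun y => ∃ i, ω i = y).card : ℝ)) := by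
  convert visit_half_by_four_hitting_general hP hirr four_pos one_half_lt_one Y x using 4
  all_goals norm_num [div_eq_mul_inv]

end Paper
end

section
/- Let P be a Markov chain on a finite state space X with stationary distribution π. Then for every x ∈ X and every n ≥ 0, the relative entropy satisfies D(Pⁿ(x,·) ‖ π) ≤ sep(x,n) · log(1/π_*), where sep(x,n) = max_{y∈X} (1 − Pⁿ(x,y)/π(y)) is the separation distance and π_* = min_y π(y). -/
open Finset
open scoped Classical

namespace Paper

variable {X : Type} [Fintype X] [DecidableEq X]

/-! If `s` is the separation of `μ` from `π`, then `(1 - s) π ≤ μ` pointwise, so `μ` is a mixture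
`(1 - s) π + s ν` for some probability vector `ν`. Relative entropy is convex in its first
argument, vanishes at `π`, and is at most `log (1 / π_*)` at every probability vector, in
particular at `ν`. -/

theorem IsStoch.pow_mem_stdSimplex {P : Matrix X X ℝ} (hP : IsStoch P) (n : ℕ) (x : X) :
    (P ^ n) x ∈ stdSimplex ℝ X :=
  have hPn : P ^ n ∈ Matrix.rowStochastic ℝ X :=
    pow_mem (Matrix.mem_rowStochastic_iff_sum.2 hP) n
  ⟨fun _ => Matrix.nonneg_of_mem_rowStochastic hPn, Matrix.sum_row_of_mem_rowStochastic hPn x⟩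

theorem exists_mem_stdSimplex_eq_add_smul {𝕜 ι : Type*} [Field 𝕜] [LinearOrder 𝕜]
    [IsStrictOrderedRing 𝕜] [Fintype ι] {μ π : ι → 𝕜} (hμ : μ ∈ stdSimplex 𝕜 ι)
    (hπ : π ∈ stdSimplex 𝕜 ι) {s : 𝕜} (hs : 0 ≤ s) (hle : ∀ y, (1 - s) * π y ≤ μ y) :
    ∃ ν ∈ stdSimplex 𝕜 ι, μ = (1 - s) • π + s • ν := by
  rcases hs.eq_or_lt with rfl | hs
  · have hπμ : ∀ y ∈ univ, π y = μ y :=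
      (sum_eq_sum_iff_of_le fun y _ => by simpa using hle y).1 (hπ.2.trans hμ.2.symm)
    exact ⟨π, hπ, by ext y; simp [hπμ y (mem_univ y)]⟩
  · refine ⟨s⁻¹ • (μ - (1 - s) • π), ⟨fun y => ?_, ?_⟩, ?_⟩
    · exact mul_nonneg (inv_nonneg.2 hs.le) (sub_nonneg.2 (hle y))
    · simp only [Pi.smul_apply, Pi.sub_apply, smul_eq_mul, ← mul_sum, sum_sub_distrib, hμ.2, hπ.2]
      field_simp
      ring
    · rw [smul_inv_smul₀ hs.ne', add_sub_cancel]

/-- The separation of `μ` from `π`, of which `sep P π x n` is the case `μ = Pⁿ(x,·)`. As in `sep`,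
the maximum over the finite state space is written as a supremum. -/
noncomputable def separation {ι : Type*} (μ π : ι → ℝ) : ℝ := ⨆ y, (1 - μ y / π y)

section Separation

variable {ι : Type*} {μ π : ι → ℝ}

theorem separation_le_one (hμ : 0 ≤ μ) (hπ : 0 ≤ π) : separation μ π ≤ 1 :=
  Real.iSup_le (fun y => sub_le_self 1 (div_nonneg (hμ y) (hπ y))) zero_le_one

theorem one_sub_div_le_separation [Finite ι] (μ π : ι → ℝ) (y : ι) :
    1 - μ y / π y ≤ separation μ π :=
  le_ciSup (Set.finite_range fun y => 1 - μ y / π y).bddAbove y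

theorem one_sub_separation_mul_le [Finite ι] (μ : ι → ℝ) {y : ι} (hy : 0 < π y) :
    (1 - separation μ π) * π y ≤ μ y :=
  (le_div_iff₀ hy).1 (sub_le_comm.1 (one_sub_div_le_separation μ π y))

theorem separation_nonneg [Fintype ι] (hπ : ∀ y, 0 < π y) (hsum : ∑ y, μ y ≤ ∑ y, π y) :
    0 ≤ separation μ π := by
  rcases isEmpty_or_nonempty ι with _ | _
  · simp [separation]
  · obtain ⟨y, -, hy⟩ : ∃ y ∈ univ, μ y ≤ π y := exists_le_of_sum_le univ_nonempty hsum
    calc 0 ≤ 1 - μ y / π y := sub_nonneg.2 ((div_le_one (hπ y)).2 hy)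
      _ ≤ separation μ π := one_sub_div_le_separation μ π y

end Separation

section RelativeEntropy

variable {ι : Type} [Fintype ι] {μ π : ι → ℝ}

theorem relEnt_self (π : ι → ℝ) : relEnt π π = 0 :=
  sum_eq_zero fun y _ => by rcases eq_or_ne (π y) 0 with h | h <;> simp [h]

theorem convexOn_mul_log_div {c : ℝ} (hc : 0 < c) :
    ConvexOn ℝ (Set.Ici 0) fun t : ℝ => t * Real.log (t / c) := by
  have hlin : ConvexOn ℝ (Set.Ici 0) fun t : ℝ => t * -Real.log c :=
    ((LinearMap.id : ℝ →ₗ[ℝ] ℝ).smulRight (-Real.log c)).convexOn (convex_Ici 0)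
  refine (Real.convexOn_mul_log.add hlin).congr fun t _ => ?_
  rcases eq_or_ne t 0 with rfl | ht
  · simp
  · simp only [Pi.add_apply, Real.log_div ht hc.ne']
    ring

theorem convexOn_relEnt (hπ : ∀ y, 0 < π y) :
    ConvexOn ℝ (Set.Ici 0) fun μ : ι → ℝ => relEnt μ π := by
  refine ⟨convex_Ici 0, fun μ hμ ν hν a b ha hb hab => ?_⟩
  simp only [relEnt, smul_eq_mul, mul_sum, ← sum_add_distrib]
  exact sum_le_sum fun y _ => (convexOn_mul_log_div (hπ y)).2 (hμ y) (hν y) ha hb hab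

theorem relEnt_le_log_one_div_iInf (hμ : μ ∈ stdSimplex ℝ ι) (hπ : ∀ y, 0 < π y) :
    relEnt μ π ≤ Real.log (1 / ⨅ y, π y) := by
  have hterm (y : ι) : μ y * Real.log (μ y / π y) ≤ μ y * Real.log (1 / ⨅ y, π y) := by
    have : Nonempty ι := ⟨y⟩
    obtain ⟨z, hz⟩ := exists_eq_ciInf_of_finite (f := π)
    have hmin_pos : 0 < ⨅ y, π y := hz ▸ hπ z
    have hmin_le : ⨅ y, π y ≤ π y := ciInf_le (Set.finite_range π).bddBelow y
    rcases (hμ.1 y).eq_or_lt with hzero | hpos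
    · simp [← hzero]
    · have hμ_le : μ y ≤ 1 := (mem_Icc_of_mem_stdSimplex hμ y).2
      have := hπ y
      gcongr
  calc relEnt μ π ≤ ∑ y, μ y * Real.log (1 / ⨅ y, π y) := sum_le_sum fun y _ => hterm y
    _ = Real.log (1 / ⨅ y, π y) := by rw [← sum_mul, hμ.2, one_mul]

theorem relEnt_le_sep_general (hμ : μ ∈ stdSimplex ℝ ι) (hpos : ∀ y, 0 < π y)
    (hsum : ∑ y, π y = 1) :
    relEnt μ π ≤ separation μ π * Real.log (1 / ⨅ y, π y) := by
  have hπ : π ∈ stdSimplex ℝ ι := ⟨fun y => (hpos y).le, hsum⟩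
  have hs₀ : 0 ≤ separation μ π := separation_nonneg hpos (hμ.2.trans hsum.symm).le
  have hs₁ : 0 ≤ 1 - separation μ π := sub_nonneg.2 (separation_le_one hμ.1 hπ.1)
  obtain ⟨ν, hν, hmix⟩ := exists_mem_stdSimplex_eq_add_smul hμ hπ hs₀
    fun y => one_sub_separation_mul_le μ (hpos y)
  calc relEnt μ π
      = relEnt ((1 - separation μ π) • π + separation μ π • ν) π := by rw [← hmix]
    _ ≤ (1 - separation μ π) * relEnt π π + separation μ π * relEnt ν π :=
        (convexOn_relEnt hpos).2 hπ.1 hν.1 hs₁ hs₀ (sub_add_cancel _ _)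
    _ = separation μ π * relEnt ν π := by rw [relEnt_self, mul_zero, zero_add]
    _ ≤ separation μ π * Real.log (1 / ⨅ y, π y) := by
        gcongr
        exact relEnt_le_log_one_div_iInf hν hpos

end RelativeEntropy

/-- `D(Pⁿ(x,·) ‖ π) ≤ sep(x,n) · log(1/π_*)`. -/
theorem relEnt_le_sep
    (X : Type) [Fintype X] [DecidableEq X] [Nonempty X]
    (P : Matrix X X ℝ) (pi : X → ℝ)
    (hP : IsStoch P) (hpos : ∀ y, 0 < pi y) (hsum : ∑ y, pi y = 1)
    (hstat : ∀ y, ∑ x, pi x * P x y = pi y)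
    (x : X) (n : ℕ) :
    relEnt ((P ^ n) x) pi ≤ sep P pi x n * Real.log (1 / ⨅ y, pi y) :=
  relEnt_le_sep_general (hP.pow_mem_stdSimplex n x) hpos hsum

end Paper
end

section
/- Let P be a reversible irreducible aperiodic Markov chain on a finite state space X with stationary distribution π. Then there is an absolute constant C > 0 such that for every 0 < ε < 1/2: τ_tv(√(ε/2)) ≤ τ_ent(ε) ≤ C · τ_tv(1/(2e)) · [log log(1/π_*) + log(1/ε)], where π_* = min_y π(y). (The lower bound follows from Pinsker's inequality 2·d_tv(μ,ν)² ≤ D(μ‖ν) and does not require reversibility.) -/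
open Finset
open scoped Classical

namespace Paper

variable {X : Type} [Fintype X] [DecidableEq X]

/-!
By Pinsker's inequality, entropy at most `ε` forces total variation distance at most `√(ε/2)`.

For the upper bound write `L = log (1 / π_*)`. Since `Pⁿ(x, ·) ≤ π / π_*`, the log-density of
`Pⁿ(x, ·)` with respect to `π` is at most `L`, and hence
`D(Pⁿ(x, ·) ‖ π) ≤ (1 + L) d_tv(Pⁿ(x, ·), π)`. The `ℓ¹` distance to `π` contracts by a factor `1/e`
every `τ_tv(1/(2e))` steps, so the entropy falls below `ε` after `⌈log ((1 + L) / ε)⌉` such blocks.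
-/

open Filter InformationTheory
open scoped Matrix

section Scalar

lemma hasDerivAt_mul_klFun_sub {x : ℝ} (hx : x ≠ 0) :
    HasDerivAt (fun y => (2 * y + 4) * klFun y - 3 * (y - 1) ^ 2)
      (2 * klFun x + (2 * x + 4) * Real.log x - 6 * (x - 1)) x := by
  have hlin : HasDerivAt (fun y : ℝ => 2 * y + 4) 2 x := by
    simpa using ((hasDerivAt_id x).const_mul 2).add_const 4
  have hsq : HasDerivAt (fun y : ℝ => 3 * (y - 1) ^ 2) (6 * (x - 1)) x :=
    ((((hasDerivAt_id x).sub_const 1).pow 2).const_mul 3).congr_deriv (by simp only [id]; ring)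
  exact (hlin.mul (hasDerivAt_klFun hx)).sub hsq

lemma hasDerivAt_deriv_mul_klFun_sub {x : ℝ} (hx : x ≠ 0) :
    HasDerivAt (fun y => 2 * klFun y + (2 * y + 4) * Real.log y - 6 * (y - 1))
      (4 * (Real.log x - (1 - x⁻¹))) x := by
  have hlin : HasDerivAt (fun y : ℝ => 2 * y + 4) 2 x := by
    simpa using ((hasDerivAt_id x).const_mul 2).add_const 4
  have hsub : HasDerivAt (fun y : ℝ => 6 * (y - 1)) 6 x := by
    simpa using ((hasDerivAt_id x).sub_const 1).const_mul 6
  refine ((((hasDerivAt_klFun hx).const_mul 2).add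
    (hlin.mul (Real.hasDerivAt_log hx))).sub hsub).congr_deriv ?_
  field_simp
  ring

lemma convexOn_mul_klFun_sub :
    ConvexOn ℝ (Set.Ici 0) fun x => (2 * x + 4) * klFun x - 3 * (x - 1) ^ 2 := by
  refine convexOn_of_hasDerivWithinAt2_nonneg (convex_Ici 0) (by fun_prop)
    (fun x hx => (hasDerivAt_mul_klFun_sub ?_).hasDerivWithinAt)
    (fun x hx => (hasDerivAt_deriv_mul_klFun_sub ?_).hasDerivWithinAt)
    (fun x hx => mul_nonneg zero_le_four
      (sub_nonneg.2 (Real.one_sub_inv_le_log_of_pos ?_))) <;>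
    rw [interior_Ici] at hx
  exacts [hx.ne', hx.ne', hx]

-- For `r = dμ/dν` the weight `(2 * r + 4) / 3` has `ν`-mean `2`, which is what Cauchy–Schwarz needs
-- to give the sharp constant in Pinsker's inequality.
lemma three_mul_sub_one_sq_le_mul_klFun {r : ℝ} (hr : 0 ≤ r) :
    3 * (r - 1) ^ 2 ≤ (2 * r + 4) * klFun r := by
  have hmin : IsMinOn (fun x => (2 * x + 4) * klFun x - 3 * (x - 1) ^ 2) (Set.Ici 0) 1 := by
    refine convexOn_mul_klFun_sub.isMinOn_of_rightDeriv_eq_zero (by simp) ?_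
    rw [(hasDerivAt_mul_klFun_sub one_ne_zero).hasDerivWithinAt.derivWithin
      (uniqueDiffWithinAt_Ioi 1)]
    simp [klFun_one]
  simpa [klFun_one] using hmin hr

-- The left side exceeds `log L + log (1 / ε)` by at most `1 + 1 / L ≤ 5 / 2`, while
-- `log L + log (1 / ε) ≥ 1 - 1 / L + log 2 ≥ 1 / 4`; whence the constant `11 = 1 + 10`.
lemma natCeil_log_one_add_div_le {L ε : ℝ} (hL : Real.log 2 ≤ L) (hε : 0 < ε) (hε' : ε ≤ 1 / 2) :
    (⌈Real.log ((1 + L) / ε)⌉₊ : ℝ) ≤ 11 * (Real.log L + Real.log (1 / ε)) := by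
  have log_two_gt := Real.log_two_gt_d9
  have hL₀ : 0 < L := by linarith
  have hL_inv : L⁻¹ ≤ 1.4431 := by
    have hlog : (1.4431 : ℝ)⁻¹ ≤ Real.log 2 := by norm_num; linarith
    exact inv_le_of_inv_le₀ (by norm_num) (hlog.trans hL)
  have log_one_div_ge : Real.log 2 ≤ Real.log (1 / ε) :=
    Real.log_le_log two_pos (by rw [le_div_iff₀ hε]; linarith)
  have log_L_ge : 1 - L⁻¹ ≤ Real.log L := Real.one_sub_inv_le_log_of_pos hL₀
  have log_one_add_le : Real.log (1 + L) ≤ Real.log L + L⁻¹ := by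
    have hfactor : 1 + L = L * (1 + L⁻¹) := by field_simp; ring
    rw [hfactor, Real.log_mul hL₀.ne' (by positivity)]
    linarith [Real.log_le_sub_one_of_pos (show 0 < 1 + L⁻¹ by positivity)]
  have log_div_eq : Real.log ((1 + L) / ε) = Real.log (1 + L) + Real.log (1 / ε) := by
    rw [div_eq_mul_one_div, Real.log_mul (by positivity) (by positivity)]
  have log_div_nonneg : 0 ≤ Real.log ((1 + L) / ε) := by
    linarith [Real.log_nonneg (show 1 ≤ 1 + L by linarith)]
  linarith [Nat.ceil_lt_add_one log_div_nonneg]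

end Scalar

section FiniteVectors

lemma iInf_pos_of_forall_pos {ι : Type*} [Finite ι] [Nonempty ι] {f : ι → ℝ}
    (hf : ∀ i, 0 < f i) : 0 < ⨅ i, f i := by
  obtain ⟨i, hi⟩ := exists_eq_ciInf_of_finite (f := f)
  exact hi ▸ hf i

lemma vecMul_pow_eq_self {n R : Type*} [Fintype n] [DecidableEq n] [Semiring R] {v : n → R}
    {M : Matrix n n R} (hv : v ᵥ* M = v) (k : ℕ) : v ᵥ* M ^ k = v := by
  induction k with
  | zero => rw [pow_zero, Matrix.vecMul_one]
  | succ k ih => rw [pow_succ, ← Matrix.vecMul_vecMul, ih, hv]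

-- Subtracting the same row `ν` from every row of `Q` does not change `f ᵥ* Q`.
lemma sum_abs_vecMul_le {m n : Type*} [Fintype m] [Fintype n] {Q : Matrix m n ℝ} {ν : n → ℝ} {a : ℝ}
    (hQ : ∀ x, ∑ y, |Q x y - ν y| ≤ a) {f : m → ℝ} (hf : ∑ x, f x = 0) :
    ∑ y, |(f ᵥ* Q) y| ≤ a * ∑ x, |f x| := by
  have hshift (y : n) : (f ᵥ* Q) y = ∑ x, f x * (Q x y - ν y) := by
    simp_rw [mul_sub, sum_sub_distrib, ← sum_mul, hf, zero_mul, sub_zero]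
    rfl
  calc ∑ y, |(f ᵥ* Q) y| ≤ ∑ y, ∑ x, |f x| * |Q x y - ν y| := by
        gcongr with y
        simpa only [hshift, abs_mul] using
          abs_sum_le_sum_abs (fun x => f x * (Q x y - ν y)) univ
    _ = ∑ x, |f x| * ∑ y, |Q x y - ν y| := by
        rw [sum_comm]; simp_rw [mul_sum]
    _ ≤ ∑ x, |f x| * a := by gcongr with x; exact hQ x
    _ = a * ∑ x, |f x| := by rw [← sum_mul, mul_comm]

end FiniteVectors

section Distributions

variable {α : Type} [Fintype α] {μ ν : α → ℝ}

lemma dtv_eq_sum_posPart (μ ν : α → ℝ) : dtv μ ν = ∑ y, (ν y - μ y)⁺ := by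
  rw [dtv, sum_filter]
  refine sum_congr rfl fun y _ => ?_
  split_ifs with hy
  · rw [posPart_of_nonneg (by linarith)]
  · rw [posPart_of_nonpos (by linarith)]

lemma dtv_comm_of_sum_eq (h : ∑ y, μ y = ∑ y, ν y) : dtv μ ν = dtv ν μ := by
  rw [← sub_eq_zero, dtv_eq_sum_posPart, dtv_eq_sum_posPart, ← sum_sub_distrib]
  simp_rw [← neg_sub (ν _) (μ _), posPart_neg, posPart_sub_negPart]
  rw [sum_sub_distrib, h, sub_self]

lemma sum_abs_sub_eq_two_mul_dtv (h : ∑ y, μ y = ∑ y, ν y) :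
    ∑ y, |μ y - ν y| = 2 * dtv μ ν := by
  rw [two_mul]
  nth_rw 1 [dtv_comm_of_sum_eq h]
  simp_rw [dtv_eq_sum_posPart, ← sum_add_distrib, ← neg_sub (μ _) (ν _), posPart_neg,
    posPart_add_negPart]

lemma dtv_le_sum (hμ : ∀ y, 0 ≤ μ y) (hν : ∀ y, 0 ≤ ν y) : dtv μ ν ≤ ∑ y, ν y := by
  rw [dtv_eq_sum_posPart]
  exact sum_le_sum fun y _ => max_le (sub_le_self _ (hμ y)) (hν y)

lemma relEnt_eq_sum_mul_klFun (hν : ∀ y, 0 < ν y) (h : ∑ y, μ y = ∑ y, ν y) :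
    relEnt μ ν = ∑ y, ν y * klFun (μ y / ν y) := by
  have hterm (y : α) : ν y * klFun (μ y / ν y) = μ y * Real.log (μ y / ν y) + (ν y - μ y) := by
    have := (hν y).ne'
    rw [klFun_apply]
    field_simp
    ring
  simp_rw [hterm, sum_add_distrib, sum_sub_distrib, h, sub_self, add_zero, relEnt]

theorem two_mul_dtv_sq_le_relEnt (hμ : μ ∈ stdSimplex ℝ α) (hν : ∀ y, 0 < ν y)
    (hν_sum : ∑ y, ν y = 1) : 2 * dtv μ ν ^ 2 ≤ relEnt μ ν := by
  have hmass : ∑ y, μ y = ∑ y, ν y := hμ.2.trans hν_sum.symm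
  have hratio (y : α) : 0 ≤ μ y / ν y := div_nonneg (hμ.1 y) (hν y).le
  have hpoint (y : α) :
      |μ y - ν y| ^ 2 ≤ (2 * μ y + 4 * ν y) / 3 * (ν y * klFun (μ y / ν y)) := by
    have hμ_eq : μ y = ν y * (μ y / ν y) := (mul_div_cancel₀ _ (hν y).ne').symm
    calc |μ y - ν y| ^ 2 = ν y ^ 2 / 3 * (3 * (μ y / ν y - 1) ^ 2) := by
          rw [sq_abs]; nth_rw 1 [hμ_eq]; ring
      _ ≤ ν y ^ 2 / 3 * ((2 * (μ y / ν y) + 4) * klFun (μ y / ν y)) := by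
          gcongr ν y ^ 2 / 3 * ?_; exact three_mul_sub_one_sq_le_mul_klFun (hratio y)
      _ = (2 * μ y + 4 * ν y) / 3 * (ν y * klFun (μ y / ν y)) := by
          nth_rw 3 [hμ_eq]; ring
  have hcauchy := sum_sq_le_sum_mul_sum_of_sq_le_mul univ
    (fun y _ => by linarith [hμ.1 y, hν y])
    (fun y _ => mul_nonneg (hν y).le (klFun_nonneg (hratio y))) (fun y _ => hpoint y)
  rw [sum_abs_sub_eq_two_mul_dtv hmass, ← relEnt_eq_sum_mul_klFun hν hmass, ← sum_div,
    sum_add_distrib, ← mul_sum, ← mul_sum, hμ.2, hν_sum] at hcauchy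
  linarith

theorem relEnt_le_one_add_log_mul_dtv {M : ℝ} (hμ : μ ∈ stdSimplex ℝ α) (hν : ∀ y, 0 < ν y)
    (hν_sum : ∑ y, ν y = 1) (hM : ∀ y, μ y ≤ M * ν y) :
    relEnt μ ν ≤ (1 + Real.log M) * dtv μ ν := by
  have hterm (y : α) : μ y * Real.log (μ y / ν y) ≤ (1 + Real.log M) * (μ y - ν y)⁺ := by
    rcases le_total (μ y) (ν y) with hle | hle
    · rw [posPart_of_nonpos (by linarith), mul_zero]
      exact mul_nonpos_of_nonneg_of_nonpos (hμ.1 y)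
        (Real.log_nonpos (div_nonneg (hμ.1 y) (hν y).le) ((div_le_one (hν y)).2 hle))
    · have hratio : 0 < μ y / ν y := div_pos ((hν y).trans_le hle) (hν y)
      have hlog_le_log : Real.log (μ y / ν y) ≤ Real.log M :=
        Real.log_le_log hratio ((div_le_iff₀ (hν y)).2 (hM y))
      have hlog_le_sub : ν y * Real.log (μ y / ν y) ≤ μ y - ν y := by
        calc ν y * Real.log (μ y / ν y) ≤ ν y * (μ y / ν y - 1) := by
              gcongr
              · exact (hν y).le
              · exact Real.log_le_sub_one_of_pos hratio
          _ = μ y - ν y := by rw [mul_sub, mul_div_cancel₀ _ (hν y).ne', mul_one]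
      rw [posPart_of_nonneg (sub_nonneg.2 hle)]
      linarith [mul_le_mul_of_nonneg_left hlog_le_log (sub_nonneg.2 hle)]
  rw [dtv_comm_of_sum_eq (hμ.2.trans hν_sum.symm), dtv_eq_sum_posPart, mul_sum]
  exact sum_le_sum fun y _ => hterm y

lemma log_one_div_iInf_nonneg (hν : ν ∈ stdSimplex ℝ α) : 0 ≤ Real.log (1 / ⨅ y, ν y) := by
  have hinf_le : ⨅ y, ν y ≤ 1 := by
    rcases isEmpty_or_nonempty α with _ | ⟨⟨y⟩⟩
    · simp [Real.iInf_of_isEmpty]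
    · exact (ciInf_le (Set.finite_range ν).bddBelow y).trans (mem_Icc_of_mem_stdSimplex hν y).2
  rw [one_div, Real.log_inv, neg_nonneg]
  exact Real.log_nonpos (Real.iInf_nonneg hν.1) hinf_le

lemma log_two_le_log_one_div_iInf [Nontrivial α] (hν : ∀ y, 0 < ν y) (hν_sum : ∑ y, ν y = 1) :
    Real.log 2 ≤ Real.log (1 / ⨅ y, ν y) := by
  obtain ⟨a, b, hab⟩ := exists_pair_ne α
  have hpair : ν a + ν b ≤ 1 := by
    rw [← sum_pair hab, ← hν_sum]
    exact sum_le_univ_sum_of_nonneg fun y => (hν y).le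
  have hinf (y : α) : ⨅ z, ν z ≤ ν y := ciInf_le (Set.finite_range ν).bddBelow y
  refine Real.log_le_log two_pos ((le_div_iff₀ (iInf_pos_of_forall_pos hν)).2 ?_)
  linarith [hinf a, hinf b]

theorem relEnt_le_one_add_log_one_div_iInf_mul_dtv (hμ : μ ∈ stdSimplex ℝ α)
    (hν : ∀ y, 0 < ν y) (hν_sum : ∑ y, ν y = 1) :
    relEnt μ ν ≤ (1 + Real.log (1 / ⨅ y, ν y)) * dtv μ ν := by
  refine relEnt_le_one_add_log_mul_dtv hμ hν hν_sum fun y => ?_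
  have : Nonempty α := ⟨y⟩
  have hinf_le : ⨅ z, ν z ≤ ν y := ciInf_le (Set.finite_range ν).bddBelow y
  calc μ y ≤ 1 := (mem_Icc_of_mem_stdSimplex hμ y).2
    _ ≤ 1 / (⨅ z, ν z) * ν y := by
      rwa [one_div_mul_eq_div, one_le_div₀ (iInf_pos_of_forall_pos hν)]

end Distributions

section StochasticMatrices

variable {α : Type} [Fintype α] {Q : Matrix α α ℝ} {ν : α → ℝ}

lemma IsStoch.vecMul_eq_of_detailedBalance (hQ : IsStoch Q)
    (hrev : ∀ x y, ν x * Q x y = ν y * Q y x) : ν ᵥ* Q = ν := by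
  funext y
  calc (ν ᵥ* Q) y = ∑ x, ν y * Q y x := sum_congr rfl fun x _ => hrev x y
    _ = ν y := by rw [← mul_sum, hQ.2, mul_one]

-- Doeblin's minorization, with `ν` the vector of column minima.
lemma IsStoch.exists_sum_abs_sub_le_lt_one [Nonempty α] (hQ : IsStoch Q)
    (hpos : ∀ x y, 0 < Q x y) :
    ∃ (ν : α → ℝ) (a : ℝ), 0 ≤ a ∧ a < 1 ∧ ∀ x, ∑ y, |Q x y - ν y| ≤ a := by
  let ν : α → ℝ := fun y => ⨅ x, Q x y
  have hν_le (x y : α) : ν y ≤ Q x y := ciInf_le (Set.finite_range _).bddBelow x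
  have hν_pos (y : α) : 0 < ν y := iInf_pos_of_forall_pos fun x => hpos x y
  have hrow (x : α) : ∑ y, |Q x y - ν y| = 1 - ∑ y, ν y := by
    simp_rw [abs_of_nonneg (sub_nonneg.2 (hν_le x _)), sum_sub_distrib, hQ.2]
  obtain ⟨x₀⟩ := ‹Nonempty α›
  refine ⟨ν, 1 - ∑ y, ν y, ?_, ?_, fun x => (hrow x).le⟩
  · exact hrow x₀ ▸ sum_nonneg fun _ _ => abs_nonneg _
  · exact sub_lt_self 1 (sum_pos (fun y _ => hν_pos y) ⟨x₀, mem_univ x₀⟩)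

end StochasticMatrices

section Chains

variable {P : Matrix X X ℝ} {pi : X → ℝ}

lemma isStoch_iff_mem_rowStochastic : IsStoch P ↔ P ∈ Matrix.rowStochastic ℝ X :=
  Matrix.mem_rowStochastic_iff_sum.symm

lemma IsStoch.pow (hP : IsStoch P) (n : ℕ) : IsStoch (P ^ n) :=
  isStoch_iff_mem_rowStochastic.2 (pow_mem (isStoch_iff_mem_rowStochastic.1 hP) n)

lemma IsStoch.pow_row_mem_stdSimplex (hP : IsStoch P) (n : ℕ) (x : X) :
    (P ^ n) x ∈ stdSimplex ℝ X :=
  ⟨(hP.pow n).1 x, (hP.pow n).2 x⟩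

lemma IsStoch.dtv_pow_add_le_mul (hP : IsStoch P) (hstat : pi ᵥ* P = pi) (hsum : ∑ y, pi y = 1)
    {ν : X → ℝ} {a : ℝ} {m : ℕ} (hm : ∀ x, ∑ y, |(P ^ m) x y - ν y| ≤ a) (n : ℕ) (x : X) :
    dtv ((P ^ (n + m)) x) pi ≤ a * dtv ((P ^ n) x) pi := by
  have hmass (k : ℕ) : ∑ y, (P ^ k) x y = ∑ y, pi y := ((hP.pow k).2 x).trans hsum.symm
  have hstep : ((P ^ n) x - pi) ᵥ* P ^ m = (P ^ (n + m)) x - pi := by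
    rw [Matrix.sub_vecMul, vecMul_pow_eq_self hstat, pow_add, Matrix.mul_apply_eq_vecMul]
  have hcontract := sum_abs_vecMul_le hm (f := (P ^ n) x - pi)
    (by simp only [Pi.sub_apply, sum_sub_distrib, hmass, sub_self])
  simp only [hstep, Pi.sub_apply, sum_abs_sub_eq_two_mul_dtv (hmass _)] at hcontract
  linarith

lemma IsStoch.dtv_pow_le_pow_of_mul_le (hP : IsStoch P) (hpi : ∀ y, 0 ≤ pi y) (hstat : pi ᵥ* P = pi)
    (hsum : ∑ y, pi y = 1) {ν : X → ℝ} {a : ℝ} (ha : 0 ≤ a) {m : ℕ}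
    (hm : ∀ x, ∑ y, |(P ^ m) x y - ν y| ≤ a) {k n : ℕ} (hn : k * m ≤ n) (x : X) :
    dtv ((P ^ n) x) pi ≤ a ^ k := by
  induction k generalizing n with
  | zero =>
    rw [pow_zero, ← hsum]
    exact dtv_le_sum ((hP.pow n).1 x) hpi
  | succ k ih =>
    obtain ⟨l, rfl⟩ := Nat.exists_eq_add_of_le' ((Nat.le_mul_of_pos_left m k.succ_pos).trans hn)
    have hl : k * m ≤ l := by linarith [Nat.succ_mul k m]
    calc dtv ((P ^ (l + m)) x) pi ≤ a * dtv ((P ^ l) x) pi :=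
        hP.dtv_pow_add_le_mul hstat hsum hm l x
      _ ≤ a * a ^ k := by gcongr; exact ih hl
      _ = a ^ (k + 1) := (pow_succ' a k).symm

theorem IsStoch.eventually_dtv_pow_le (hP : IsStoch P) (hpi : ∀ y, 0 ≤ pi y)
    (hstat : pi ᵥ* P = pi) (hsum : ∑ y, pi y = 1) (hprim : ∃ n, ∀ x y, 0 < (P ^ n) x y)
    {δ : ℝ} (hδ : 0 < δ) : ∀ᶠ n in atTop, ∀ x, dtv ((P ^ n) x) pi ≤ δ := by
  rcases isEmpty_or_nonempty X with _ | _
  · exact .of_forall fun _ x => isEmptyElim x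
  obtain ⟨m, hm⟩ := hprim
  obtain ⟨ν, a, ha₀, ha₁, hrow⟩ := (hP.pow m).exists_sum_abs_sub_le_lt_one hm
  obtain ⟨k, hk⟩ := exists_pow_lt_of_lt_one hδ ha₁
  filter_upwards [eventually_ge_atTop (k * m)] with n hn x
  exact (hP.dtv_pow_le_pow_of_mul_le hpi hstat hsum ha₀ hrow hn x).trans hk.le

theorem IsStoch.eventually_relEnt_pow_le (hP : IsStoch P) (hpi : ∀ y, 0 < pi y)
    (hstat : pi ᵥ* P = pi) (hsum : ∑ y, pi y = 1) (hprim : ∃ n, ∀ x y, 0 < (P ^ n) x y)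
    {ε : ℝ} (hε : 0 < ε) : ∀ᶠ n in atTop, ∀ x, relEnt ((P ^ n) x) pi ≤ ε := by
  have hL : 0 < 1 + Real.log (1 / ⨅ y, pi y) :=
    add_pos_of_pos_of_nonneg one_pos (log_one_div_iInf_nonneg ⟨fun y => (hpi y).le, hsum⟩)
  filter_upwards [hP.eventually_dtv_pow_le (fun y => (hpi y).le) hstat hsum hprim
    (div_pos hε hL)] with n hn x
  exact (relEnt_le_one_add_log_one_div_iInf_mul_dtv (hP.pow_row_mem_stdSimplex n x) hpi hsum).trans
    ((le_div_iff₀' hL).1 (hn x))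

theorem IsStoch.tauTV_sqrt_le_tauEnt (hP : IsStoch P) (hpi : ∀ y, 0 < pi y)
    (hstat : pi ᵥ* P = pi) (hsum : ∑ y, pi y = 1) (hprim : ∃ n, ∀ x y, 0 < (P ^ n) x y)
    {ε : ℝ} (hε : 0 < ε) : tauTV P pi (Real.sqrt (ε / 2)) ≤ tauEnt P pi ε := by
  refine Nat.sInf_le fun n hn x => Real.le_sqrt_of_sq_le ?_
  have hent : relEnt ((P ^ n) x) pi ≤ ε :=
    Nat.sInf_mem (eventually_atTop.1 (hP.eventually_relEnt_pow_le hpi hstat hsum hprim hε)) n hn x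
  linarith [two_mul_dtv_sq_le_relEnt (hP.pow_row_mem_stdSimplex n x) hpi hsum]

theorem IsStoch.dtv_pow_le_two_mul_pow_of_mul_tauTV_le (hP : IsStoch P) (hpi : ∀ y, 0 ≤ pi y)
    (hstat : pi ᵥ* P = pi) (hsum : ∑ y, pi y = 1) (hprim : ∃ n, ∀ x y, 0 < (P ^ n) x y)
    {δ : ℝ} (hδ : 0 < δ) {k n : ℕ} (hn : k * tauTV P pi δ ≤ n) (x : X) :
    dtv ((P ^ n) x) pi ≤ (2 * δ) ^ k := by
  refine hP.dtv_pow_le_pow_of_mul_le (ν := pi) hpi hstat hsum (by positivity) (fun z => ?_) hn x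
  have hτ : dtv ((P ^ tauTV P pi δ) z) pi ≤ δ :=
    Nat.sInf_mem (eventually_atTop.1 (hP.eventually_dtv_pow_le hpi hstat hsum hprim hδ)) _ le_rfl z
  rw [sum_abs_sub_eq_two_mul_dtv (((hP.pow _).2 z).trans hsum.symm)]
  linarith

theorem IsStoch.tauEnt_le_natCeil_mul_tauTV (hP : IsStoch P) (hpi : ∀ y, 0 < pi y)
    (hstat : pi ᵥ* P = pi) (hsum : ∑ y, pi y = 1) (hprim : ∃ n, ∀ x y, 0 < (P ^ n) x y)
    {ε : ℝ} (hε : 0 < ε) :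
    tauEnt P pi ε ≤
      ⌈Real.log ((1 + Real.log (1 / ⨅ y, pi y)) / ε)⌉₊ * tauTV P pi (2 * Real.exp 1)⁻¹ := by
  set L := Real.log (1 / ⨅ y, pi y)
  set k := ⌈Real.log ((1 + L) / ε)⌉₊
  have hL : 0 < 1 + L :=
    add_pos_of_pos_of_nonneg one_pos (log_one_div_iInf_nonneg ⟨fun y => (hpi y).le, hsum⟩)
  have hk : (1 + L) / ε ≤ Real.exp k :=
    (Real.log_le_iff_le_exp (by positivity)).1 (Nat.le_ceil _)
  refine Nat.sInf_le fun n hn x => ?_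
  have hdtv : dtv ((P ^ n) x) pi ≤ (Real.exp k)⁻¹ := by
    convert hP.dtv_pow_le_two_mul_pow_of_mul_tauTV_le (fun y => (hpi y).le) hstat hsum hprim
      (by positivity) hn x using 1
    rw [mul_inv, mul_inv_cancel_left₀ two_ne_zero, inv_pow, ← Real.exp_nat_mul, mul_one]
  calc relEnt ((P ^ n) x) pi ≤ (1 + L) * dtv ((P ^ n) x) pi :=
        relEnt_le_one_add_log_one_div_iInf_mul_dtv (hP.pow_row_mem_stdSimplex n x) hpi hsum
    _ ≤ (1 + L) * (Real.exp k)⁻¹ := by gcongr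
    _ ≤ ε := by rwa [← div_eq_mul_inv, div_le_comm₀ (Real.exp_pos _) hε]

lemma IsStoch.tauTV_eq_zero_of_subsingleton [Subsingleton X] (hP : IsStoch P)
    (hsum : ∑ y, pi y = 1) {δ : ℝ} (hδ : 0 ≤ δ) : tauTV P pi δ = 0 := by
  refine Nat.le_zero.1 (Nat.sInf_le fun n _ x => ?_)
  have hrow : (P ^ n) x = pi := by
    funext y
    rw [← Fintype.sum_subsingleton ((P ^ n) x) y, ← Fintype.sum_subsingleton pi y,
      (hP.pow n).2, hsum]
  simpa [hrow, dtv] using hδ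

theorem tauEnt_between_tauTV_general (hP : IsStoch P) (hpi : ∀ y, 0 < pi y)
    (hsum : ∑ y, pi y = 1) (hstat : pi ᵥ* P = pi) (hprim : ∃ n, ∀ x y, 0 < (P ^ n) x y)
    {ε : ℝ} (hε : 0 < ε) (hε' : ε ≤ 1 / 2) :
    tauTV P pi (Real.sqrt (ε / 2)) ≤ tauEnt P pi ε ∧
      (tauEnt P pi ε : ℝ) ≤
        11 * (tauTV P pi (2 * Real.exp 1)⁻¹ : ℝ) *
          (Real.log (Real.log (1 / ⨅ y, pi y)) + Real.log (1 / ε)) := by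
  refine ⟨hP.tauTV_sqrt_le_tauEnt hpi hstat hsum hprim hε, ?_⟩
  have hblocks := hP.tauEnt_le_natCeil_mul_tauTV hpi hstat hsum hprim hε
  rcases subsingleton_or_nontrivial X with _ | _
  -- Here `log (1 / π_*) = 0`, so the bracket takes the junk value `log 0 = 0`; both times vanish.
  · have hτ : tauTV P pi (2 * Real.exp 1)⁻¹ = 0 :=
      hP.tauTV_eq_zero_of_subsingleton hsum (by positivity)
    rw [hτ, mul_zero, Nat.le_zero] at hblocks
    rw [hblocks, hτ]
    simp
  · set τ := tauTV P pi (2 * Real.exp 1)⁻¹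
    set L := Real.log (1 / ⨅ y, pi y)
    calc (tauEnt P pi ε : ℝ) ≤ ⌈Real.log ((1 + L) / ε)⌉₊ * τ := mod_cast hblocks
      _ ≤ 11 * (Real.log L + Real.log (1 / ε)) * τ := by
        gcongr
        exact natCeil_log_one_add_div_le (log_two_le_log_one_div_iInf hpi hsum) hε hε'
      _ = 11 * τ * (Real.log L + Real.log (1 / ε)) := by ring

end Chains

/-- For a reversible irreducible aperiodic chain, for `0 < ε < 1/2`:
`τ_tv(√(ε/2)) ≤ τ_ent(ε) ≤ C τ_tv(1/(2e)) [log log(1/π_*) + log(1/ε)]`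
for an absolute constant `C > 0`. -/
theorem tauEnt_between_tauTV :
    ∃ C : ℝ, 0 < C ∧
      ∀ (X : Type) [Fintype X] [DecidableEq X] [Nonempty X]
        (P : Matrix X X ℝ) (pi : X → ℝ),
        IsStoch P → (∀ y, 0 < pi y) → (∑ y, pi y) = 1 →
        (∀ x y, pi x * P x y = pi y * P y x) →
        (∃ n, ∀ x y, 0 < (P ^ n) x y) →
        ∀ ε : ℝ, 0 < ε → ε < 1 / 2 →
          tauTV P pi (Real.sqrt (ε / 2)) ≤ tauEnt P pi ε ∧
          (tauEnt P pi ε : ℝ) ≤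
            C * (tauTV P pi (2 * Real.exp 1)⁻¹ : ℝ) *
              (Real.log (Real.log (1 / ⨅ y, pi y)) + Real.log (1 / ε)) := by
  exact ⟨11, by norm_num, fun _ _ _ _ _ _ hP hpi hsum hrev hprim _ hε hε' =>
    tauEnt_between_tauTV_general hP hpi hsum (hP.vecMul_eq_of_detailedBalance hrev) hprim hε hε'.le⟩

end Paper
end

section
/- Consider the m-state lamplighter chain on the discrete cycle Z_n (n ≥ 2, m ≥ 2): the state space is {0,…,m−1}^{Z_n} × Z_n, and at each step the lamplighter takes one step of the random walk on the cycle while the lamp at each vertex it visits is replaced by an independent uniform value in {0,…,m−1}. Its stationary distribution is uniform. Then the entropy mixing time satisfies τ_ent = Θ(n²·(log n + log log m)); that is, there exist absolute constants c₁, c₂ > 0 such that c₁·n²·log(n·log m) ≤ τ_ent ≤ c₂·n²·(log n + log log m). -/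
open Finset
open scoped Classical

namespace Paper

variable {X : Type} [Fintype X] [DecidableEq X]

/-- Lazy simple random walk on the discrete cycle `ZMod n`. -/
noncomputable def cycleWalk (n : ℕ) [NeZero n] : Matrix (ZMod n) (ZMod n) ℝ :=
  fun x y => (if y = x then 1 / 2 else 0) + (if y = x + 1 then 1 / 4 else 0) +
    (if y = x - 1 then 1 / 4 else 0)

/-!
Write `M = n log m`, so that `log M = log n + log log m` and the relative entropy of a point mass
is of order `M`.

Upper bound. Conditionally on the trajectory of the lamplighter, every visited lamp is uniform, so
by a union bound the separation at time `t` is at most `n ^ 3` times the decay rate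
`exp (-c t / n ^ 2)` of the probability that the walk avoids a given vertex or has not coupled with
a second walk. Separation `s` leaves relative entropy at most `s (log (1 / π_*) + 1)`, which is of
order `s M`, and this is small once `t` is a large multiple of `n ^ 2 log M`.

Lower bound. With probability at least `exp (-(2 π / n) ^ 2 t)` the walk does not reach the far
arc of at least `n / 4` vertices, since the positive part of the cosine is a sub-eigenvector of the
walk killed there. On this event those lamps keep their initial values, an event of stationary
probability at most `m ^ (-n / 4)`; it alone forces relative entropy at least
`exp (-(2 π / n) ^ 2 t) M / 4 - 1`.
-/

open scoped Matrix

section NonnegativeMatrix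

variable {ι R : Type*} [Fintype ι] [CommRing R] [PartialOrder R] [IsOrderedRing R]
  {A : Matrix ι ι R}

lemma mulVec_monotone_of_nonneg (hA : ∀ i j, 0 ≤ A i j) : Monotone (A *ᵥ ·) :=
  fun _ _ hab i => Finset.sum_le_sum fun j _ => mul_le_mul_of_nonneg_left (hab j) (hA i j)

variable [DecidableEq ι] {c : R} {h : ι → R}

lemma pow_mulVec_le_of_mulVec_le (hA : ∀ i j, 0 ≤ A i j) (hc : 0 ≤ c) (hh : A *ᵥ h ≤ c • h)
    (t : ℕ) : A ^ t *ᵥ h ≤ c ^ t • h := by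
  induction t with
  | zero => simp
  | succ t ih =>
    calc A ^ (t + 1) *ᵥ h = A ^ t *ᵥ A *ᵥ h := by rw [pow_succ, Matrix.mulVec_mulVec]
      _ ≤ A ^ t *ᵥ c • h := mulVec_monotone_of_nonneg (Matrix.pow_apply_nonneg hA t) hh
      _ = c • A ^ t *ᵥ h := Matrix.mulVec_smul _ _ _
      _ ≤ c • c ^ t • h := smul_le_smul_of_nonneg_left ih hc
      _ = c ^ (t + 1) • h := by rw [smul_smul, pow_succ']

lemma pow_smul_le_pow_mulVec (hA : ∀ i j, 0 ≤ A i j) (hc : 0 ≤ c) (hh : c • h ≤ A *ᵥ h)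
    (t : ℕ) : c ^ t • h ≤ A ^ t *ᵥ h := by
  have := pow_mulVec_le_of_mulVec_le (h := -h) hA hc (by simpa [Matrix.mulVec_neg] using hh) t
  simpa [Matrix.mulVec_neg] using this

end NonnegativeMatrix

section RelativeEntropy

variable {Y : Type} [Fintype Y] {μ pi : Y → ℝ}

lemma mul_log_le_sub_one_sub_mul {r s L : ℝ} (hr : 0 ≤ r) (hs : 0 ≤ s) (hsr : 1 - s ≤ r)
    (hL : 0 ≤ L) (hrL : Real.log r ≤ L) : r * Real.log r ≤ (r - (1 - s)) * (L + 1) := by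
  rcases le_or_gt r 1 with hr1 | hr1
  · exact (mul_nonpos_of_nonneg_of_nonpos hr (Real.log_nonpos hr hr1)).trans
      (mul_nonneg (sub_nonneg.2 hsr) (by linarith))
  · have hlog : Real.log r ≤ r - 1 := Real.log_le_sub_one_of_pos (by linarith)
    calc r * Real.log r = (r - 1) * Real.log r + Real.log r := by ring
      _ ≤ (r - 1) * L + (r - 1) := by gcongr
      _ ≤ (r - (1 - s)) * (L + 1) := by nlinarith

lemma relEnt_le_of_one_sub_mul_le {δ s : ℝ} (hδ : 0 < δ) (hδpi : ∀ y, δ ≤ pi y)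
    (hpi : pi ∈ stdSimplex ℝ Y) (hμ : μ ∈ stdSimplex ℝ Y) (hs : 0 ≤ s)
    (hsep : ∀ y, (1 - s) * pi y ≤ μ y) : relEnt μ pi ≤ s * (Real.log δ⁻¹ + 1) := by
  have le_one {ν : Y → ℝ} (hν : ν ∈ stdSimplex ℝ Y) (y : Y) : ν y ≤ 1 :=
    hν.2 ▸ Finset.single_le_sum (fun i _ => hν.1 i) (Finset.mem_univ y)
  have pointwise (y : Y) :
      μ y * Real.log (μ y / pi y) ≤ (μ y - (1 - s) * pi y) * (Real.log δ⁻¹ + 1) := by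
    have hpos : 0 < pi y := hδ.trans_le (hδpi y)
    have ratio_le : μ y / pi y ≤ δ⁻¹ := by
      rw [← one_div]
      exact div_le_div₀ zero_le_one (le_one hμ y) hδ (hδpi y)
    have log_ratio_le : Real.log (μ y / pi y) ≤ Real.log δ⁻¹ := by
      rcases (div_nonneg (hμ.1 y) hpos.le).eq_or_lt with h0 | h0
      · rw [← h0, Real.log_zero]
        exact Real.log_nonneg (one_le_inv_iff₀.2 ⟨hδ, (hδpi y).trans (le_one hpi y)⟩)
      · exact Real.log_le_log h0 ratio_le
    have := mul_log_le_sub_one_sub_mul (div_nonneg (hμ.1 y) hpos.le) hs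
      ((le_div_iff₀ hpos).2 (hsep y))
      (Real.log_nonneg (one_le_inv_iff₀.2 ⟨hδ, (hδpi y).trans (le_one hpi y)⟩)) log_ratio_le
    calc μ y * Real.log (μ y / pi y)
        = pi y * (μ y / pi y * Real.log (μ y / pi y)) := by field_simp
      _ ≤ pi y * ((μ y / pi y - (1 - s)) * (Real.log δ⁻¹ + 1)) := by gcongr
      _ = (μ y - (1 - s) * pi y) * (Real.log δ⁻¹ + 1) := by field_simp
  calc relEnt μ pi ≤ ∑ y, (μ y - (1 - s) * pi y) * (Real.log δ⁻¹ + 1) :=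
        Finset.sum_le_sum fun y _ => pointwise y
    _ = s * (Real.log δ⁻¹ + 1) := by
        rw [← Finset.sum_mul, Finset.sum_sub_distrib, ← Finset.mul_sum, hμ.2, hpi.2]
        ring

lemma mul_log_add_sub_mul_le {a p w : ℝ} (ha : 0 ≤ a) (hp : 0 < p) (hw : 0 < w) :
    a * Real.log w + a - p * w ≤ a * Real.log (a / p) := by
  rcases ha.eq_or_lt with rfl | ha
  · simpa using (mul_pos hp hw).le
  · have hlog := Real.one_sub_inv_le_log_of_pos (div_pos (div_pos ha hp) hw)
    rw [Real.log_div (by positivity) hw.ne'] at hlog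
    have hmul := mul_le_mul_of_nonneg_left hlog ha.le
    have expand : a * (1 - (a / p / w)⁻¹) = a - p * w := by field_simp
    linarith

/-- The Donsker–Varadhan bound, with `log x` replaced by its upper bound `x - 1`. -/
lemma sum_mul_log_add_one_sub_le_relEnt (hμ : μ ∈ stdSimplex ℝ Y) (hpi : ∀ y, 0 < pi y)
    {w : Y → ℝ} (hw : ∀ y, 0 < w y) :
    ∑ y, μ y * Real.log (w y) + 1 - ∑ y, pi y * w y ≤ relEnt μ pi := by
  have := Finset.sum_le_sum fun y (_ : y ∈ Finset.univ) =>
    mul_log_add_sub_mul_le (hμ.1 y) (hpi y) (hw y)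
  rwa [Finset.sum_sub_distrib, Finset.sum_add_distrib, hμ.2] at this

lemma sum_mul_log_inv_sub_one_le_relEnt (hμ : μ ∈ stdSimplex ℝ Y) (hpi : pi ∈ stdSimplex ℝ Y)
    (hpos : ∀ y, 0 < pi y) {A : Finset Y} (hA : A.Nonempty) :
    (∑ y ∈ A, μ y) * Real.log (∑ y ∈ A, pi y)⁻¹ - 1 ≤ relEnt μ pi := by
  set a := ∑ y ∈ A, pi y
  have ha : 0 < a := Finset.sum_pos (fun y _ => hpos y) hA
  set w : Y → ℝ := fun y => 1 + if y ∈ A then a⁻¹ else 0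
  have one_le_w (y : Y) : 1 ≤ w y := le_add_of_nonneg_right (by positivity)
  have sum_pi_mul_w : ∑ y, pi y * w y = 2 := by
    simp only [w, mul_add, mul_one, mul_ite, mul_zero, Finset.sum_add_distrib, hpi.2,
      Finset.sum_ite_mem, Finset.univ_inter, ← Finset.sum_mul]
    rw [mul_inv_cancel₀ ha.ne']
    norm_num
  have le_log_w (y : Y) : (if y ∈ A then μ y * Real.log a⁻¹ else 0) ≤ μ y * Real.log (w y) := by
    split_ifs with hy
    · refine mul_le_mul_of_nonneg_left (Real.log_le_log (by positivity) ?_) (hμ.1 y)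
      simp [w, hy]
    · exact mul_nonneg (hμ.1 y) (Real.log_nonneg (one_le_w y))
  have sum_le := Finset.sum_le_sum fun y (_ : y ∈ Finset.univ) => le_log_w y
  rw [Finset.sum_ite_mem, Finset.univ_inter, ← Finset.sum_mul] at sum_le
  have := sum_mul_log_add_one_sub_le_relEnt hμ hpos fun y => one_pos.trans_le (one_le_w y)
  linarith

lemma unif_mem_stdSimplex [Nonempty Y] : unif Y ∈ stdSimplex ℝ Y :=
  ⟨fun _ => by unfold unif; positivity, by simp [unif]⟩

lemma unif_pos (y : Y) : 0 < unif Y y :=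
  inv_pos.2 (Nat.cast_pos.2 (Fintype.card_pos_iff.2 ⟨y⟩))

end RelativeEntropy

section MixingTime

variable {Y : Type} [Fintype Y] [DecidableEq Y] {P : Matrix Y Y ℝ} {pi : Y → ℝ} {ε T : ℝ}

lemma row_mem_stdSimplex (hP : P ∈ Matrix.rowStochastic ℝ Y) (x : Y) : P x ∈ stdSimplex ℝ Y :=
  ⟨fun _ => Matrix.nonneg_of_mem_rowStochastic hP, Matrix.sum_row_of_mem_rowStochastic hP x⟩

lemma relEnt_one_row (pi : Y → ℝ) (x : Y) :
    relEnt ((1 : Matrix Y Y ℝ) x) pi = Real.log (pi x)⁻¹ := by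
  simp [relEnt, Matrix.one_apply]

lemma tauEnt_le_ceil (h : ∀ t : ℕ, T ≤ t → ∀ x, relEnt ((P ^ t) x) pi ≤ ε) :
    tauEnt P pi ε ≤ ⌈T⌉₊ :=
  Nat.sInf_le fun t ht => h t (Nat.ceil_le.1 ht)

lemma relEnt_pow_tauEnt_le (h : ∀ t : ℕ, T ≤ t → ∀ x, relEnt ((P ^ t) x) pi ≤ ε) (x : Y) :
    relEnt ((P ^ tauEnt P pi ε) x) pi ≤ ε :=
  Nat.sInf_mem (s := {n' | ∀ n ≥ n', ∀ x, relEnt ((P ^ n) x) pi ≤ ε})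
    ⟨⌈T⌉₊, fun t ht => h t (Nat.ceil_le.1 ht)⟩ _ le_rfl x

end MixingTime

section Killed

variable {V : Type*} {P : Matrix V V ℝ} {A : Finset V}

/-- The walk `P` killed on `A`: the entry `(killed P A ^ t) x y`, for `t ≠ 0`, is the probability
that the walk goes from `x` to `y` in `t` steps without touching `A`, the endpoints included. -/
noncomputable def killed (P : Matrix V V ℝ) (A : Finset V) : Matrix V V ℝ :=
  fun x y => if x ∈ A ∨ y ∈ A then 0 else P x y

lemma killed_nonneg (hP : ∀ x y, 0 ≤ P x y) (x y : V) : 0 ≤ killed P A x y := by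
  unfold killed
  split_ifs
  exacts [le_rfl, hP x y]

lemma killed_le (hP : ∀ x y, 0 ≤ P x y) (x y : V) : killed P A x y ≤ P x y := by
  unfold killed
  split_ifs
  exacts [hP x y, le_rfl]

variable [Fintype V] {a : V → ℝ}

lemma killed_mulVec_of_mem {x : V} (hx : x ∈ A) (a : V → ℝ) : (killed P A *ᵥ a) x = 0 := by
  simp [killed, Matrix.mulVec, dotProduct, hx]

lemma killed_mulVec_le (hP : ∀ x y, 0 ≤ P x y) (ha : 0 ≤ a) : killed P A *ᵥ a ≤ P *ᵥ a :=
  fun x => Finset.sum_le_sum fun y _ => mul_le_mul_of_nonneg_right (killed_le hP x y) (ha y)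

lemma killed_mulVec_of_notMem {x : V} (hx : x ∉ A) (ha : ∀ y ∈ A, a y = 0) :
    (killed P A *ᵥ a) x = (P *ᵥ a) x := by
  refine Finset.sum_congr rfl fun y _ => ?_
  by_cases hy : y ∈ A
  · simp [ha y hy]
  · simp [killed, hx, hy]

lemma sum_killed_singleton_pow_succ [DecidableEq V] (P : Matrix V V ℝ) (W : Finset V) (x y : V)
    (t : ℕ) :
    ∑ z ∈ Wᶜ, (killed P {z} ^ (t + 1)) x y =
      ∑ u, (∑ z ∈ ({u, y} ∪ W)ᶜ, (killed P {z} ^ t) x u) * P u y := by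
  simp only [pow_succ, Matrix.mul_apply]
  rw [Finset.sum_comm]
  refine Finset.sum_congr rfl fun u _ => ?_
  have subset : ({u, y} ∪ W)ᶜ ⊆ Wᶜ := Finset.compl_subset_compl.2 Finset.subset_union_right
  rw [Finset.sum_mul, ← Finset.sum_subset subset]
  · refine Finset.sum_congr rfl fun z hz => ?_
    have : ¬ (u = z ∨ y = z) := by grind [Finset.mem_compl]
    simp [killed, this]
  · intro z hzW hz
    have : u = z ∨ y = z := by grind [Finset.mem_compl]
    simp [killed, this]

end Killed

section Refresh

variable {V : Type*} [Fintype V] [DecidableEq V] {m : ℕ}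

/-- The transition matrix on lamp configurations that replaces the lamps in `W` by independent
uniform values and leaves all other lamps alone. -/
noncomputable def refresh (m : ℕ) (W : Finset V) : Matrix (V → Fin m) (V → Fin m) ℝ :=
  fun f g => ∏ z, if z ∈ W then (m : ℝ)⁻¹ else if g z = f z then 1 else 0

lemma refresh_apply (W : Finset V) (f g : V → Fin m) :
    refresh m W f g = if ∀ z ∉ W, g z = f z then (m : ℝ)⁻¹ ^ #W else 0 := by
  split_ifs with h
  · have (z : V) : (if z ∈ W then (m : ℝ)⁻¹ else if g z = f z then 1 else 0) =
        if z ∈ W then (m : ℝ)⁻¹ else 1 := by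
      split_ifs with hz hgf
      exacts [rfl, rfl, absurd (h z hz) hgf]
    simp only [refresh, this, Finset.prod_ite_mem, Finset.univ_inter, Finset.prod_const]
  · push Not at h
    obtain ⟨z, hz, hgf⟩ := h
    exact Finset.prod_eq_zero (Finset.mem_univ z) (by simp [hz, hgf])

lemma refresh_nonneg (W : Finset V) (f g : V → Fin m) : 0 ≤ refresh m W f g := by
  rw [refresh_apply]
  positivity

lemma refresh_empty : refresh m (∅ : Finset V) = 1 := by
  ext f g
  simp [refresh_apply, Matrix.one_apply, funext_iff, eq_comm]

lemma refresh_univ (f g : V → Fin m) :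
    refresh m Finset.univ f g = (m : ℝ)⁻¹ ^ Fintype.card V := by
  simp [refresh_apply]

variable [NeZero m]

lemma refresh_mul_refresh (W W' : Finset V) :
    refresh m W * refresh m W' = refresh m (W ∪ W') := by
  have hm : (m : ℝ) ≠ 0 := NeZero.ne _
  ext f g
  simp only [Matrix.mul_apply, refresh, ← Finset.prod_mul_distrib]
  rw [← Fintype.piFinset_univ, ← Finset.prod_univ_sum (fun _ => Finset.univ) fun z a =>
    (if z ∈ W then (m : ℝ)⁻¹ else if a = f z then 1 else 0) *
      (if z ∈ W' then (m : ℝ)⁻¹ else if g z = a then 1 else 0)]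
  refine Finset.prod_congr rfl fun z _ => ?_
  by_cases hW : z ∈ W <;> by_cases hW' : z ∈ W' <;> simp [hW, hW', hm]

lemma sum_refresh (W : Finset V) (f : V → Fin m) : ∑ g, refresh m W f g = 1 := by
  have hm : (m : ℝ)⁻¹ ^ Fintype.card V ≠ 0 := by have := NeZero.ne (m : ℝ); positivity
  have := congrFun₂ (refresh_mul_refresh (m := m) W Finset.univ) f f
  rw [Finset.union_eq_right.2 (Finset.subset_univ W)] at this
  simp only [Matrix.mul_apply, refresh_univ, ← Finset.sum_mul] at this
  exact mul_right_cancel₀ hm (this.trans (one_mul _).symm)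

lemma card_agreeOn (A : Finset V) (g : V → Fin m) :
    (#{f : V → Fin m | ∀ z ∈ A, f z = g z} : ℝ) * (m : ℝ)⁻¹ ^ Fintype.card V = (m : ℝ)⁻¹ ^ #A := by
  have hsum := sum_refresh Aᶜ g
  simp only [refresh_apply, Finset.mem_compl, not_not, ← Finset.sum_filter, Finset.sum_const,
    nsmul_eq_mul] at hsum
  calc _ = (#{f : V → Fin m | ∀ z ∈ A, f z = g z} : ℝ) * (m : ℝ)⁻¹ ^ #Aᶜ * (m : ℝ)⁻¹ ^ #A := by
        rw [mul_assoc, ← pow_add, Finset.card_compl_add_card]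
    _ = (m : ℝ)⁻¹ ^ #A := by rw [hsum, one_mul]

end Refresh

section Lamplighter

variable {V : Type} [Fintype V] [DecidableEq V] {Pb : Matrix V V ℝ} {m : ℕ}

lemma lampChain_apply (Pb : Matrix V V ℝ) (p q : (V → Fin m) × V) :
    lampChain Pb m p q = Pb p.2 q.2 * refresh m {p.2, q.2} p.1 q.1 := by
  simp [lampChain, refresh_apply]

lemma lampChain_nonneg (hPb : ∀ x y, 0 ≤ Pb x y) (p q : (V → Fin m) × V) :
    0 ≤ lampChain Pb m p q := by
  rw [lampChain_apply]
  exact mul_nonneg (hPb _ _) (refresh_nonneg _ _ _)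

lemma unif_lamp_apply (q : (V → Fin m) × V) :
    unif ((V → Fin m) × V) q = (Fintype.card V : ℝ)⁻¹ * (m : ℝ)⁻¹ ^ Fintype.card V := by
  simp [unif, mul_comm]

/-- The probability that refreshing the lamps in `W` brings a state to `(g, y)`. -/
noncomputable def refreshHits (m : ℕ) (W : Finset V) (g : V → Fin m) (y : V)
    (q : (V → Fin m) × V) : ℝ :=
  (Pi.single y 1 : V → ℝ) q.2 * refresh m W q.1 g

lemma refreshHits_empty (g : V → Fin m) (y : V) : refreshHits m ∅ g y = Pi.single (g, y) 1 := by
  ext q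
  simp [refreshHits, refresh_empty, Matrix.one_apply, Pi.single_apply, Prod.ext_iff, ite_and]

variable [NeZero m]

lemma lampChain_mem_rowStochastic (hPb : Pb ∈ Matrix.rowStochastic ℝ V) :
    lampChain Pb m ∈ Matrix.rowStochastic ℝ ((V → Fin m) × V) := by
  rw [Matrix.mem_rowStochastic_iff_sum] at hPb ⊢
  refine ⟨lampChain_nonneg hPb.1, fun p => ?_⟩
  simp only [lampChain_apply, Fintype.sum_prod_type_right, ← Finset.mul_sum, sum_refresh,
    mul_one, hPb.2]

lemma lampChain_mulVec_mul_refresh (Pb : Matrix V V ℝ) (a : V → ℝ) (W : Finset V) (g : V → Fin m)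
    (p : (V → Fin m) × V) :
    (lampChain Pb m *ᵥ fun q => a q.2 * refresh m W q.1 g) p =
      ∑ y, Pb p.2 y * a y * refresh m ({p.2, y} ∪ W) p.1 g := by
  simp only [Matrix.mulVec, dotProduct, Fintype.sum_prod_type_right]
  refine Finset.sum_congr rfl fun y _ => ?_
  rw [← refresh_mul_refresh, Matrix.mul_apply, Finset.mul_sum]
  refine Finset.sum_congr rfl fun f _ => ?_
  rw [lampChain_apply]
  ring

lemma lampChain_mulVec_refreshHits (Pb : Matrix V V ℝ) (W : Finset V) (g : V → Fin m) (y : V) :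
    lampChain Pb m *ᵥ refreshHits m W g y =
      ∑ u, Pb u y • refreshHits m ({u, y} ∪ W) g u := by
  ext p
  refine (lampChain_mulVec_mul_refresh Pb (Pi.single y 1) W g p).trans ?_
  simp [refreshHits, Pi.single_apply]

/-- Averaged over the trajectory, this is a union bound: unless some lamp outside `W` has not been
refreshed within `t` steps, the configuration `g` comes up with its stationary probability. -/
lemma sub_sum_killed_pow_mul_le_lampChain_pow_mulVec (hPb : ∀ x y, 0 ≤ Pb x y) (W : Finset V)
    (f g : V → Fin m) (x y : V) (t : ℕ) :
    ((Pb ^ t) x y - ∑ z ∈ Wᶜ, (killed Pb {z} ^ t) x y) * (m : ℝ)⁻¹ ^ Fintype.card V ≤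
      (lampChain Pb m ^ t *ᵥ refreshHits m W g y) (f, x) := by
  induction t generalizing W y with
  | zero =>
    rcases eq_or_ne x y with rfl | hxy
    · rcases Wᶜ.eq_empty_or_nonempty with hW | hW
      · obtain rfl : W = Finset.univ := by simpa using hW
        simp [refreshHits, refresh_univ]
      · have one_le_card : (1 : ℝ) ≤ #Wᶜ := by exact_mod_cast hW.card_pos
        have hneg : (1 - (#Wᶜ : ℝ)) * (m : ℝ)⁻¹ ^ Fintype.card V ≤ 0 :=
          mul_nonpos_of_nonpos_of_nonneg (by linarith) (by positivity)
        simpa [refreshHits] using hneg.trans (refresh_nonneg W f g)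
    · simp [hxy, refreshHits]
  | succ t ih =>
    have step := Finset.sum_le_sum fun u (_ : u ∈ Finset.univ) =>
      mul_le_mul_of_nonneg_left (ih ({u, y} ∪ W) u) (hPb u y)
    calc _ = ∑ u, Pb u y * (((Pb ^ t) x u - ∑ z ∈ ({u, y} ∪ W)ᶜ, (killed Pb {z} ^ t) x u) *
            (m : ℝ)⁻¹ ^ Fintype.card V) := by
          rw [sum_killed_singleton_pow_succ, pow_succ, Matrix.mul_apply, ← Finset.sum_sub_distrib,
            Finset.sum_mul]
          exact Finset.sum_congr rfl fun u _ => by ring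
      _ ≤ _ := step
      _ = _ := by
          rw [pow_succ (lampChain Pb m), ← Matrix.mulVec_mulVec, lampChain_mulVec_refreshHits,
            Matrix.mulVec_sum, Finset.sum_apply]
          simp only [Matrix.mulVec_smul, Pi.smul_apply, smul_eq_mul]

lemma sub_sum_killed_pow_mul_le_lampChain_pow (hPb : ∀ x y, 0 ≤ Pb x y)
    (p q : (V → Fin m) × V) (t : ℕ) :
    ((Pb ^ t) p.2 q.2 - ∑ z, (killed Pb {z} ^ t) p.2 q.2) * (m : ℝ)⁻¹ ^ Fintype.card V ≤
      (lampChain Pb m ^ t) p q := by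
  have := sub_sum_killed_pow_mul_le_lampChain_pow_mulVec hPb ∅ p.1 q.1 p.2 q.2 t
  rwa [refreshHits_empty, Matrix.mulVec_single_one, Finset.compl_empty] at this

lemma relEnt_lampChain_pow_le (hPb : Pb ∈ Matrix.rowStochastic ℝ V) {s : ℝ} {t : ℕ} (hs : 0 ≤ s)
    (hcover : ∀ x y, (1 - s) * (Fintype.card V : ℝ)⁻¹ ≤
      (Pb ^ t) x y - ∑ z, (killed Pb {z} ^ t) x y) (p : (V → Fin m) × V) :
    relEnt ((lampChain Pb m ^ t) p) (unif ((V → Fin m) × V)) ≤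
      s * (Real.log (Fintype.card V * (m : ℝ) ^ Fintype.card V) + 1) := by
  have : Nonempty ((V → Fin m) × V) := ⟨p⟩
  have separation (q : (V → Fin m) × V) :
      (1 - s) * unif ((V → Fin m) × V) q ≤ (lampChain Pb m ^ t) p q := by
    rw [unif_lamp_apply, ← mul_assoc]
    exact (mul_le_mul_of_nonneg_right (hcover p.2 q.2) (by positivity)).trans
      (sub_sum_killed_pow_mul_le_lampChain_pow (Matrix.mem_rowStochastic.1 hPb).1 p q t)
  have := relEnt_le_of_one_sub_mul_le (pi := unif _) (unif_pos p) (fun _ => le_rfl)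
    unif_mem_stdSimplex (row_mem_stdSimplex (pow_mem (lampChain_mem_rowStochastic hPb) t) p) hs
    separation
  rwa [unif_lamp_apply p, mul_inv, inv_inv, inv_pow, inv_inv] at this

lemma killed_pow_mulVec_mul_refresh_le (hPb : ∀ x y, 0 ≤ Pb x y) (A : Finset V) (g : V → Fin m)
    {a : V → ℝ} (ha : 0 ≤ a) (t : ℕ) :
    (fun q => (killed Pb A ^ t *ᵥ a) q.2 * refresh m Aᶜ q.1 g) ≤
      lampChain Pb m ^ t *ᵥ fun q => a q.2 * refresh m Aᶜ q.1 g := by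
  have step {b : V → ℝ} (hb : 0 ≤ b) : (fun q => (killed Pb A *ᵥ b) q.2 * refresh m Aᶜ q.1 g) ≤
      lampChain Pb m *ᵥ fun q => b q.2 * refresh m Aᶜ q.1 g := by
    intro q
    rw [lampChain_mulVec_mul_refresh]
    simp only [Matrix.mulVec, dotProduct, Finset.sum_mul]
    refine Finset.sum_le_sum fun y _ => ?_
    by_cases hA : q.2 ∈ A ∨ y ∈ A
    · simpa [killed, hA] using
        mul_nonneg (mul_nonneg (hPb q.2 y) (hb y)) (refresh_nonneg _ q.1 g)
    · have : {q.2, y} ∪ Aᶜ = Aᶜ := by grind [Finset.mem_compl]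
      simp [killed, hA, this]
  induction t generalizing a with
  | zero => simp
  | succ t ih =>
    have killed_mulVec_nonneg : 0 ≤ killed Pb A *ᵥ a := fun x =>
      Finset.sum_nonneg fun y _ => mul_nonneg (killed_nonneg hPb x y) (ha y)
    rw [pow_succ, ← Matrix.mulVec_mulVec, pow_succ, ← Matrix.mulVec_mulVec]
    exact (ih killed_mulVec_nonneg).trans (mulVec_monotone_of_nonneg
      (Matrix.pow_apply_nonneg (lampChain_nonneg hPb) t) (step ha))

lemma killed_pow_mulVec_one_le_sum_lampChain_pow (hPb : ∀ x y, 0 ≤ Pb x y) (A : Finset V)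
    (g : V → Fin m) (x : V) (t : ℕ) :
    (killed Pb A ^ t *ᵥ 1) x ≤
      ∑ q : (V → Fin m) × V with ∀ z ∈ A, q.1 z = g z, (lampChain Pb m ^ t) (g, x) q := by
  have hm : (0 : ℝ) < (m : ℝ)⁻¹ ^ #Aᶜ := by have := NeZero.ne (m : ℝ); positivity
  have := killed_pow_mulVec_mul_refresh_le hPb A g zero_le_one t (g, x)
  refine le_of_mul_le_mul_right (this.trans_eq' ?_ |>.trans_eq ?_) hm
  · simp [refresh_apply]
  · simp [Matrix.mulVec, dotProduct, refresh_apply, Finset.sum_filter, Finset.sum_mul, eq_comm]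

lemma sum_unif_agreeOn [Nonempty V] (A : Finset V) (g : V → Fin m) :
    ∑ q : (V → Fin m) × V with ∀ z ∈ A, q.1 z = g z, unif ((V → Fin m) × V) q =
      (m : ℝ)⁻¹ ^ #A := by
  have hV : (Fintype.card V : ℝ) ≠ 0 := Nat.cast_ne_zero.2 Fintype.card_ne_zero
  simp only [unif_lamp_apply, Finset.sum_filter, Fintype.sum_prod_type_right]
  simp only [← Finset.sum_filter, Finset.sum_const, nsmul_eq_mul, Finset.card_univ]
  rw [← card_agreeOn A g]
  field_simp

lemma le_relEnt_lampChain_pow (hPb : Pb ∈ Matrix.rowStochastic ℝ V) (A : Finset V)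
    (g : V → Fin m) (x : V) (t : ℕ) :
    (killed Pb A ^ t *ᵥ 1) x * (#A * Real.log m) - 1 ≤
      relEnt ((lampChain Pb m ^ t) (g, x)) (unif ((V → Fin m) × V)) := by
  have : Nonempty V := ⟨x⟩
  have entropy := sum_mul_log_inv_sub_one_le_relEnt
    (row_mem_stdSimplex (pow_mem (lampChain_mem_rowStochastic hPb) t) (g, x))
    unif_mem_stdSimplex unif_pos (A := {q | ∀ z ∈ A, q.1 z = g z}) ⟨(g, x), by simp⟩
  rw [sum_unif_agreeOn, inv_pow, inv_inv, Real.log_pow] at entropy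
  have survival := killed_pow_mulVec_one_le_sum_lampChain_pow
    (Matrix.mem_rowStochastic.1 hPb).1 A g x t
  have := mul_le_mul_of_nonneg_right survival
    (mul_nonneg (Nat.cast_nonneg #A) (Real.log_natCast_nonneg m))
  linarith

end Lamplighter

section CycleMixing

variable {n : ℕ}

/-- Half the expected time in which the lazy walk started at `x` hits `0`. -/
noncomputable def hitPotential (n : ℕ) (x : ZMod n) : ℝ := x.val * (n - x.val)

lemma hitPotential_zero : hitPotential n 0 = 0 := by simp [hitPotential]

lemma hitPotential_le_sq (x : ZMod n) : hitPotential n x ≤ (n : ℝ) ^ 2 := by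
  unfold hitPotential
  nlinarith [sq_nonneg ((n : ℝ) - 2 * x.val), sq_nonneg (n : ℝ)]

lemma one_add_hitPotential_div_le_two (x : ZMod n) : 1 + hitPotential n x / (n : ℝ) ^ 2 ≤ 2 := by
  linarith [div_le_one_of_le₀ (hitPotential_le_sq x) (sq_nonneg _)]

variable [NeZero n]

lemma cycleWalk_nonneg (x y : ZMod n) : 0 ≤ cycleWalk n x y := by
  unfold cycleWalk
  positivity

lemma cycleWalk_mulVec (a : ZMod n → ℝ) (x : ZMod n) :
    (cycleWalk n *ᵥ a) x = a x / 2 + a (x + 1) / 4 + a (x - 1) / 4 := by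
  simp only [Matrix.mulVec, dotProduct, cycleWalk, add_mul, ite_mul, zero_mul,
    Finset.sum_add_distrib, Finset.sum_ite_eq', Finset.mem_univ, if_true]
  ring

lemma cycleWalk_transpose : (cycleWalk n)ᵀ = cycleWalk n := by
  ext x y
  simp only [Matrix.transpose_apply, cycleWalk, eq_comm (a := x), eq_sub_iff_add_eq,
    sub_eq_iff_eq_add]
  ring

lemma cycleWalk_mem_doublyStochastic : cycleWalk n ∈ doublyStochastic ℝ (ZMod n) := by
  have mulVec_one : cycleWalk n *ᵥ 1 = 1 := by
    ext x
    norm_num [cycleWalk_mulVec]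
  refine mem_doublyStochastic.2 ⟨cycleWalk_nonneg, mulVec_one, ?_⟩
  rw [← Matrix.mulVec_transpose, cycleWalk_transpose, mulVec_one]

lemma cycleWalk_mem_rowStochastic : cycleWalk n ∈ Matrix.rowStochastic ℝ (ZMod n) :=
  have h := mem_doublyStochastic.1 cycleWalk_mem_doublyStochastic
  Matrix.mem_rowStochastic.2 ⟨h.1, h.2.1⟩

lemma hitPotential_natCast {k : ℕ} (hk : k ≤ n) : hitPotential n k = k * (n - k) := by
  rcases hk.eq_or_lt with rfl | hk
  · simp [hitPotential]
  · simp [hitPotential, ZMod.val_cast_of_lt hk]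

lemma hitPotential_nonneg (x : ZMod n) : 0 ≤ hitPotential n x :=
  mul_nonneg (Nat.cast_nonneg _) (sub_nonneg.2 (Nat.cast_le.2 x.val_lt.le))

lemma hitPotential_add_one_add_sub_one {x : ZMod n} (hx : x ≠ 0) :
    hitPotential n (x + 1) + hitPotential n (x - 1) = 2 * hitPotential n x - 2 := by
  obtain ⟨k, hk⟩ : ∃ k, x.val = k + 1 := Nat.exists_eq_succ_of_ne_zero ((ZMod.val_ne_zero x).2 hx)
  have hkn : k + 1 < n := hk ▸ x.val_lt
  have hxk : x = ((k + 1 : ℕ) : ZMod n) := by rw [← hk, ZMod.natCast_zmod_val]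
  have hadd : x + 1 = ((k + 2 : ℕ) : ZMod n) := by rw [hxk]; push_cast; ring
  have hsub : x - 1 = (k : ZMod n) := by rw [hxk]; push_cast; ring
  rw [hadd, hsub, hxk, hitPotential_natCast (by omega), hitPotential_natCast (by omega),
    hitPotential_natCast (by omega)]
  push_cast
  ring

lemma one_le_hitPotential {x : ZMod n} (hx : x ≠ 0) : 1 ≤ hitPotential n x := by
  linarith [hitPotential_add_one_add_sub_one hx, hitPotential_nonneg (x + 1),
    hitPotential_nonneg (x - 1)]

/-- A geometric rate at which both the survival probability of the walk avoiding a point and its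
distance from equilibrium decay. -/
noncomputable def cycleRate (n : ℕ) : ℝ := 1 - 1 / (4 * (n : ℝ) ^ 2)

lemma cycleRate_nonneg : 0 ≤ cycleRate n := by
  have : (1 : ℝ) ≤ n := Nat.one_le_cast.2 NeZero.one_le
  exact sub_nonneg.2 (div_le_one_of_le₀ (by nlinarith) (by positivity))

lemma cycleRate_pow_le (t : ℕ) : cycleRate n ^ t ≤ Real.exp (-(t / (4 * (n : ℝ) ^ 2))) := by
  calc cycleRate n ^ t ≤ Real.exp (-(1 / (4 * (n : ℝ) ^ 2))) ^ t :=
        pow_le_pow_left₀ cycleRate_nonneg (Real.one_sub_le_exp_neg _) t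
    _ = Real.exp (-(t / (4 * (n : ℝ) ^ 2))) := by
        rw [← Real.exp_nat_mul]
        ring_nf

lemma killed_cycleWalk_mulVec_le (z : ZMod n) :
    (killed (cycleWalk n) {z} *ᵥ fun x => 1 + hitPotential n (x - z) / (n : ℝ) ^ 2) ≤
      cycleRate n • fun x => 1 + hitPotential n (x - z) / (n : ℝ) ^ 2 := by
  set h : ZMod n → ℝ := fun x => 1 + hitPotential n (x - z) / (n : ℝ) ^ 2
  have h_nonneg : 0 ≤ h := fun x =>
    add_nonneg zero_le_one (div_nonneg (hitPotential_nonneg _) (sq_nonneg _))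
  intro x
  by_cases hxz : x = z
  · rw [killed_mulVec_of_mem (Finset.mem_singleton.2 hxz)]
    exact mul_nonneg cycleRate_nonneg (h_nonneg x)
  · have laplace := hitPotential_add_one_add_sub_one (sub_ne_zero.2 hxz)
    calc (killed (cycleWalk n) {z} *ᵥ h) x ≤ (cycleWalk n *ᵥ h) x :=
          killed_mulVec_le cycleWalk_nonneg h_nonneg x
      _ = h x - 2 / (4 * (n : ℝ) ^ 2) := by
          simp only [cycleWalk_mulVec, h, add_sub_right_comm x 1 z, sub_right_comm x 1 z]
          linear_combination laplace / (4 * (n : ℝ) ^ 2)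
      _ ≤ h x - h x / (4 * (n : ℝ) ^ 2) := by
          gcongr
          exact one_add_hitPotential_div_le_two (x - z)
      _ = cycleRate n * h x := by
          rw [cycleRate]
          ring

lemma killed_cycleWalk_pow_le (x y z : ZMod n) (t : ℕ) :
    (killed (cycleWalk n) {z} ^ t) x y ≤ 2 * cycleRate n ^ t := by
  set h : ZMod n → ℝ := fun x => 1 + hitPotential n (x - z) / (n : ℝ) ^ 2
  have single_le_h : Pi.single y 1 ≤ h := by
    intro u
    have : 0 ≤ hitPotential n (u - z) / (n : ℝ) ^ 2 :=
      div_nonneg (hitPotential_nonneg _) (sq_nonneg _)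
    simp only [Pi.single_apply, h]
    split_ifs <;> linarith
  calc (killed (cycleWalk n) {z} ^ t) x y
      = (killed (cycleWalk n) {z} ^ t *ᵥ Pi.single y 1) x := by simp
    _ ≤ (killed (cycleWalk n) {z} ^ t *ᵥ h) x := mulVec_monotone_of_nonneg
        (Matrix.pow_apply_nonneg (killed_nonneg cycleWalk_nonneg) t) single_le_h x
    _ ≤ cycleRate n ^ t * h x := pow_mulVec_le_of_mulVec_le (killed_nonneg cycleWalk_nonneg)
        cycleRate_nonneg (killed_cycleWalk_mulVec_le z) t x
    _ ≤ cycleRate n ^ t * 2 := mul_le_mul_of_nonneg_left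
        (one_add_hitPotential_div_le_two (x - z)) (pow_nonneg cycleRate_nonneg t)
    _ = 2 * cycleRate n ^ t := mul_comm _ _

/-- Couple two walks so that exactly one of them moves at each step: their difference is then a
walk on the cycle, absorbed at `0`. -/
lemma cycleWalk_mulVec_sub_le {f : ZMod n → ℝ} {C : ℝ} (hC : 0 ≤ C)
    (hf : ∀ x x', f x - f x' ≤ C * hitPotential n (x - x')) (x x' : ZMod n) :
    (cycleWalk n *ᵥ f) x - (cycleWalk n *ᵥ f) x' ≤
      C * cycleRate n * hitPotential n (x - x') := by
  rcases eq_or_ne x x' with rfl | hxx'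
  · simp [hitPotential_zero]
  have hd : x - x' ≠ 0 := sub_ne_zero.2 hxx'
  have hn : (0 : ℝ) < (n : ℝ) ^ 2 := by have := NeZero.ne (n : ℝ); positivity
  calc (cycleWalk n *ᵥ f) x - (cycleWalk n *ᵥ f) x'
      = ((f (x + 1) - f x') + (f (x - 1) - f x') + (f x - f (x' + 1)) +
          (f x - f (x' - 1))) / 4 := by
        rw [cycleWalk_mulVec, cycleWalk_mulVec]
        ring
    _ ≤ C * (hitPotential n (x - x' + 1) + hitPotential n (x - x' - 1)) / 2 := by
        have h₁ := hf (x + 1) x'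
        have h₂ := hf (x - 1) x'
        have h₃ := hf x (x' + 1)
        have h₄ := hf x (x' - 1)
        rw [add_sub_right_comm] at h₁
        rw [sub_right_comm] at h₂
        rw [← sub_sub] at h₃
        rw [← sub_add] at h₄
        linarith
    _ = C * (hitPotential n (x - x') - 1) := by
        rw [hitPotential_add_one_add_sub_one hd]
        ring
    _ ≤ C * (hitPotential n (x - x') - hitPotential n (x - x') / (4 * (n : ℝ) ^ 2)) := by
        gcongr
        exact div_le_one_of_le₀ (by linarith [hitPotential_le_sq (x - x')]) (by positivity)
    _ = C * cycleRate n * hitPotential n (x - x') := by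
        rw [cycleRate]
        ring

lemma cycleWalk_pow_sub_le (x x' y : ZMod n) (t : ℕ) :
    (cycleWalk n ^ t) x y - (cycleWalk n ^ t) x' y ≤
      cycleRate n ^ t * hitPotential n (x - x') := by
  induction t generalizing x x' with
  | zero =>
    rcases eq_or_ne x x' with rfl | hxx'
    · simp [hitPotential_zero]
    · have := one_le_hitPotential (sub_ne_zero.2 hxx')
      simp only [pow_zero, Matrix.one_apply]
      split_ifs <;> linarith
  | succ t ih =>
    rw [pow_succ' (cycleWalk n), pow_succ (cycleRate n)]
    exact cycleWalk_mulVec_sub_le (pow_nonneg cycleRate_nonneg t) ih x x'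

lemma inv_sub_le_cycleWalk_pow (x y : ZMod n) (t : ℕ) :
    (n : ℝ)⁻¹ - (n : ℝ) ^ 2 * cycleRate n ^ t ≤ (cycleWalk n ^ t) x y := by
  have hn : (n : ℝ) ≠ 0 := NeZero.ne _
  have column_sum : ∑ x', (cycleWalk n ^ t) x' y = 1 :=
    sum_col_of_mem_doublyStochastic (pow_mem cycleWalk_mem_doublyStochastic t) y
  have close (x' : ZMod n) :
      (cycleWalk n ^ t) x' y ≤ (cycleWalk n ^ t) x y + (n : ℝ) ^ 2 * cycleRate n ^ t := by
    have := cycleWalk_pow_sub_le x' x y t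
    have : cycleRate n ^ t * hitPotential n (x' - x) ≤ cycleRate n ^ t * (n : ℝ) ^ 2 :=
      mul_le_mul_of_nonneg_left (hitPotential_le_sq _) (pow_nonneg cycleRate_nonneg t)
    linarith
  have average := Finset.sum_le_sum fun x' (_ : x' ∈ Finset.univ) => close x'
  rw [column_sum, Finset.sum_const, Finset.card_univ, ZMod.card, nsmul_eq_mul] at average
  have := (inv_le_iff_one_le_mul₀' (by positivity)).2 average
  linarith

lemma one_sub_mul_inv_le_cycleWalk_pow_sub_sum_killed (hn : 2 ≤ n) (x y : ZMod n) (t : ℕ) :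
    (1 - 2 * (n : ℝ) ^ 3 * cycleRate n ^ t) * (n : ℝ)⁻¹ ≤
      (cycleWalk n ^ t) x y - ∑ z, (killed (cycleWalk n) {z} ^ t) x y := by
  have hn' : (2 : ℝ) ≤ n := by exact_mod_cast hn
  have hrate := pow_nonneg (cycleRate_nonneg (n := n)) t
  have killed_sum : ∑ z, (killed (cycleWalk n) {z} ^ t) x y ≤ n * (2 * cycleRate n ^ t) := by
    simpa using Finset.sum_le_card_nsmul Finset.univ _ _
      fun z _ => killed_cycleWalk_pow_le x y z t
  calc (1 - 2 * (n : ℝ) ^ 3 * cycleRate n ^ t) * (n : ℝ)⁻¹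
      = (n : ℝ)⁻¹ - 2 * (n : ℝ) ^ 2 * cycleRate n ^ t := by field_simp
    _ ≤ (n : ℝ)⁻¹ - (n : ℝ) ^ 2 * cycleRate n ^ t - n * (2 * cycleRate n ^ t) := by
        nlinarith [mul_nonneg (mul_nonneg (sub_nonneg.2 hn') (Nat.cast_nonneg n)) hrate]
    _ ≤ _ := sub_le_sub (inv_sub_le_cycleWalk_pow x y t) killed_sum

end CycleMixing

section CycleSurvival

lemma exp_neg_sq_le_half_add_max_cos_half (x : ℝ) :
    Real.exp (-x ^ 2) ≤ 1 / 2 + max (Real.cos x) 0 / 2 := by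
  have exp_le : Real.exp (-x ^ 2) ≤ (1 + x ^ 2)⁻¹ := by
    rw [Real.exp_neg]
    exact inv_anti₀ (by positivity) (by linarith [Real.add_one_le_exp (x ^ 2)])
  refine exp_le.trans ((inv_le_iff_one_le_mul₀ (by positivity)).2 ?_)
  rcases le_total (x ^ 2) 1 with hx | hx
  · have cos_le : 1 - x ^ 2 / 2 ≤ max (Real.cos x) 0 :=
      (Real.one_sub_sq_div_two_le_cos).trans (le_max_left _ _)
    nlinarith [sq_nonneg x]
  · nlinarith [le_max_right (Real.cos x) 0]

variable {n : ℕ} [NeZero n]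

lemma stdAddChar_re_natCast (k : ℕ) :
    (ZMod.stdAddChar (N := n) k).re = Real.cos (2 * Real.pi * k / n) := by
  have := ZMod.stdAddChar_coe (N := n) k
  rw [Int.cast_natCast] at this
  rw [this, ← Complex.exp_ofReal_mul_I_re]
  push_cast
  ring_nf

lemma stdAddChar_re_add_one_add_sub_one (x : ZMod n) :
    (ZMod.stdAddChar (x + 1)).re + (ZMod.stdAddChar (x - 1)).re =
      2 * Real.cos (2 * Real.pi / n) * (ZMod.stdAddChar x).re := by
  have re_one : (ZMod.stdAddChar (1 : ZMod n)).re = Real.cos (2 * Real.pi / n) := by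
    simpa using stdAddChar_re_natCast (n := n) 1
  rw [sub_eq_add_neg, AddChar.map_add_eq_mul, AddChar.map_add_eq_mul, AddChar.map_neg_eq_conj,
    Complex.mul_re, Complex.mul_re, Complex.conj_re, Complex.conj_im, ← re_one]
  ring

/-- The positive part of the cosine of the angle from `0` to `x` on the cycle. -/
noncomputable def arcBump (n : ℕ) [NeZero n] (x : ZMod n) : ℝ := max (ZMod.stdAddChar x).re 0

/-- The arc of the cycle opposite to `0`, outside of which `arcBump` is positive. -/
noncomputable def farArc (n : ℕ) [NeZero n] : Finset (ZMod n) :=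
  {x | (ZMod.stdAddChar x).re ≤ 0}

lemma arcBump_eq_zero {x : ZMod n} (hx : x ∈ farArc n) : arcBump n x = 0 :=
  max_eq_right (by simpa [farArc] using hx)

lemma arcBump_nonneg (x : ZMod n) : 0 ≤ arcBump n x := le_max_right _ _

lemma arcBump_le_one : arcBump n ≤ 1 := fun x =>
  max_le ((Complex.re_le_norm _).trans_eq (AddChar.norm_apply _ x)) zero_le_one

lemma arcBump_zero : arcBump n 0 = 1 := by simp [arcBump]

lemma max_cos_mul_arcBump_le (x : ZMod n) :
    2 * max (Real.cos (2 * Real.pi / n)) 0 * arcBump n x ≤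
      arcBump n (x + 1) + arcBump n (x - 1) := by
  rcases le_total (Real.cos (2 * Real.pi / n)) 0 with hcos | hcos
  · rw [max_eq_right hcos, mul_zero, zero_mul]
    exact add_nonneg (arcBump_nonneg _) (arcBump_nonneg _)
  rcases le_total (ZMod.stdAddChar x).re 0 with hx | hx
  · rw [arcBump, max_eq_right hx, mul_zero]
    exact add_nonneg (arcBump_nonneg _) (arcBump_nonneg _)
  · rw [arcBump, max_eq_left hcos, max_eq_left hx, ← stdAddChar_re_add_one_add_sub_one]
    exact add_le_add (le_max_left _ _) (le_max_left _ _)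

lemma exp_smul_arcBump_le_killed_mulVec :
    Real.exp (-(2 * Real.pi / n) ^ 2) • arcBump n ≤
      killed (cycleWalk n) (farArc n) *ᵥ arcBump n := by
  intro x
  by_cases hx : x ∈ farArc n
  · rw [killed_mulVec_of_mem hx, Pi.smul_apply, arcBump_eq_zero hx, smul_zero]
  · rw [killed_mulVec_of_notMem hx fun y => arcBump_eq_zero, cycleWalk_mulVec]
    calc Real.exp (-(2 * Real.pi / n) ^ 2) * arcBump n x
        ≤ (1 / 2 + max (Real.cos (2 * Real.pi / n)) 0 / 2) * arcBump n x :=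
          mul_le_mul_of_nonneg_right (exp_neg_sq_le_half_add_max_cos_half _) (arcBump_nonneg x)
      _ ≤ arcBump n x / 2 + arcBump n (x + 1) / 4 + arcBump n (x - 1) / 4 := by
          linarith [max_cos_mul_arcBump_le x]

lemma exp_pow_le_killed_cycleWalk_pow_mulVec_one (t : ℕ) :
    Real.exp (-(2 * Real.pi / n) ^ 2) ^ t ≤
      (killed (cycleWalk n) (farArc n) ^ t *ᵥ 1) 0 := by
  have sub_eigenvector := pow_smul_le_pow_mulVec (killed_nonneg cycleWalk_nonneg)
    (Real.exp_pos _).le (exp_smul_arcBump_le_killed_mulVec (n := n)) t 0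
  rw [Pi.smul_apply, arcBump_zero, smul_eq_mul, mul_one] at sub_eigenvector
  exact sub_eigenvector.trans (mulVec_monotone_of_nonneg
    (Matrix.pow_apply_nonneg (killed_nonneg cycleWalk_nonneg) t) arcBump_le_one 0)

lemma natCast_mem_farArc {k : ℕ} (hk : n ≤ 4 * k) (hk' : 4 * k ≤ 3 * n) :
    (k : ZMod n) ∈ farArc n := by
  have hn : (0 : ℝ) < n := Nat.cast_pos.2 (NeZero.pos n)
  have hk : (n : ℝ) ≤ 4 * k := by exact_mod_cast hk
  have hk' : 4 * (k : ℝ) ≤ 3 * n := by exact_mod_cast hk'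
  simp only [farArc, Finset.mem_filter, Finset.mem_univ, true_and, stdAddChar_re_natCast]
  apply Real.cos_nonpos_of_pi_div_two_le_of_le
  · rw [le_div_iff₀ hn]
    nlinarith [Real.pi_pos]
  · rw [div_le_iff₀ hn]
    nlinarith [Real.pi_pos]

lemma le_four_mul_card_farArc (hn : 2 ≤ n) : n ≤ 4 * #(farArc n) := by
  have card_le : #(Finset.Icc ((n + 3) / 4) (3 * n / 4)) ≤ #(farArc n) := by
    refine Finset.card_le_card_of_injOn (fun k => (k : ZMod n)) (fun k hk => ?_) ?_
    · rw [Finset.mem_coe, Finset.mem_Icc] at hk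
      exact natCast_mem_farArc (by omega) (by omega)
    · intro j hj k hk hjk
      rw [Finset.mem_coe, Finset.mem_Icc] at hj hk
      have := congrArg ZMod.val hjk
      rwa [ZMod.val_cast_of_lt (by omega), ZMod.val_cast_of_lt (by omega)] at this
  rw [Nat.card_Icc] at card_le
  omega

end CycleSurvival

section LamplighterOnCycle

variable {n m : ℕ}

lemma two_thirds_le_log (hm : 2 ≤ m) : 2 / 3 ≤ Real.log m := by
  have hlog : Real.log 2 ≤ Real.log m := Real.log_le_log two_pos (by exact_mod_cast hm)
  linarith [Real.log_two_gt_d9]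

lemma four_thirds_le_mul_log (hn : 2 ≤ n) (hm : 2 ≤ m) : 4 / 3 ≤ n * Real.log m := by
  have hn' : (2 : ℝ) ≤ n := by exact_mod_cast hn
  nlinarith [two_thirds_le_log hm]

lemma le_three_halves_mul_log (hm : 2 ≤ m) : n ≤ 3 / 2 * (n * Real.log m) := by
  nlinarith [two_thirds_le_log hm, Nat.cast_nonneg (α := ℝ) n]

lemma quarter_le_log {M : ℝ} (hM : 4 / 3 ≤ M) : 1 / 4 ≤ Real.log M := by
  have := Real.one_sub_inv_le_log_of_pos (by linarith : 0 < M)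
  have : M⁻¹ ≤ 3 / 4 := (inv_anti₀ (by norm_num) hM).trans (by norm_num)
  linarith

variable [NeZero n]

lemma log_mul_pow_add_one_le (hm : 2 ≤ m) :
    Real.log (n * (m : ℝ) ^ n) + 1 ≤ 5 / 2 * (n * Real.log m) := by
  have : (0 : ℝ) < n := Nat.cast_pos.2 (NeZero.pos n)
  have hlog : Real.log n ≤ n - 1 := Real.log_le_sub_one_of_pos this
  rw [Real.log_mul (by positivity) (by positivity), Real.log_pow]
  linarith [le_three_halves_mul_log (n := n) hm]

lemma cycleRate_pow_le_inv_pow {M : ℝ} (hM : 0 < M) {t : ℕ} (k : ℕ)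
    (ht : 4 * k * (n : ℝ) ^ 2 * Real.log M ≤ t) : cycleRate n ^ t ≤ (M ^ k)⁻¹ := by
  have hn : (0 : ℝ) < (n : ℝ) ^ 2 := by have := NeZero.ne (n : ℝ); positivity
  calc cycleRate n ^ t ≤ Real.exp (-(t / (4 * (n : ℝ) ^ 2))) := cycleRate_pow_le t
    _ ≤ Real.exp (-(k * Real.log M)) := by
        gcongr
        rw [le_div_iff₀ (by positivity)]
        linarith
    _ = (M ^ k)⁻¹ := by rw [Real.exp_neg, ← Real.log_pow, Real.exp_log (by positivity)]

lemma relEnt_lampChain_cycleWalk_le (hn : 2 ≤ n) (hm : 2 ≤ m) {t : ℕ}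
    (ht : 72 * (n : ℝ) ^ 2 * Real.log (n * Real.log m) ≤ t) (p : (ZMod n → Fin m) × ZMod n) :
    relEnt ((lampChain (cycleWalk n) m ^ t) p) (unif ((ZMod n → Fin m) × ZMod n)) ≤
      (Real.exp 1)⁻¹ := by
  have : NeZero m := ⟨by omega⟩
  set M := n * Real.log m
  have hM : 4 / 3 ≤ M := four_thirds_le_mul_log hn hm
  have hMpos : 0 < M := by linarith
  have hrate : cycleRate n ^ t ≤ (M ^ 18)⁻¹ :=
    cycleRate_pow_le_inv_pow hMpos 18 (by norm_num; exact ht)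
  have rate_nonneg : 0 ≤ cycleRate n ^ t := pow_nonneg cycleRate_nonneg t
  have separation := relEnt_lampChain_pow_le (m := m) cycleWalk_mem_rowStochastic
    (s := 2 * (n : ℝ) ^ 3 * cycleRate n ^ t) (by positivity)
    (by simpa only [ZMod.card] using
      fun x y => one_sub_mul_inv_le_cycleWalk_pow_sub_sum_killed hn x y t) p
  rw [ZMod.card] at separation
  calc _ ≤ 2 * (n : ℝ) ^ 3 * cycleRate n ^ t * (Real.log (n * (m : ℝ) ^ n) + 1) := separation
    _ ≤ 2 * (3 / 2 * M) ^ 3 * (M ^ 18)⁻¹ * (5 / 2 * M) := by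
        have hn' : (n : ℝ) ≤ 3 / 2 * M := le_three_halves_mul_log hm
        have log_nonneg : 0 ≤ Real.log (n * (m : ℝ) ^ n) := by
          exact_mod_cast Real.log_natCast_nonneg (n * m ^ n)
        gcongr
        exact log_mul_pow_add_one_le hm
    _ = 135 / 8 * (M ^ 14)⁻¹ := by
        field_simp
        norm_num
    _ ≤ 135 / 8 * ((4 / 3) ^ 14)⁻¹ := by gcongr
    _ ≤ (2.7182818286 : ℝ)⁻¹ := by norm_num
    _ ≤ (Real.exp 1)⁻¹ := inv_anti₀ (Real.exp_pos 1) Real.exp_one_lt_d9.le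

lemma exp_pow_mul_le_of_relEnt_lampChain_cycleWalk_le (hn : 2 ≤ n) [NeZero m] {ε : ℝ} {t : ℕ}
    {g : ZMod n → Fin m}
    (ht : relEnt ((lampChain (cycleWalk n) m ^ t) (g, 0)) (unif ((ZMod n → Fin m) × ZMod n)) ≤ ε) :
    Real.exp (-(2 * Real.pi / n) ^ 2) ^ t * (n * Real.log m) ≤ 4 * (ε + 1) := by
  have entropy := (le_relEnt_lampChain_pow cycleWalk_mem_rowStochastic (farArc n) g 0 t).trans ht
  have card : (n : ℝ) ≤ 4 * #(farArc n) := by exact_mod_cast le_four_mul_card_farArc hn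
  have : 0 ≤ Real.log m := Real.log_natCast_nonneg m
  have survival := exp_pow_le_killed_cycleWalk_pow_mulVec_one (n := n) t
  have survival_nonneg := (pow_nonneg (Real.exp_pos _).le t).trans survival
  calc _ ≤ (killed (cycleWalk n) (farArc n) ^ t *ᵥ 1) 0 * (4 * #(farArc n) * Real.log m) := by
        gcongr
    _ ≤ 4 * (ε + 1) := by linarith

lemma sq_mul_log_le_add_of_relEnt_le (hn : 2 ≤ n) (hm : 2 ≤ m) {t : ℕ} {g : ZMod n → Fin m}
    (ht : relEnt ((lampChain (cycleWalk n) m ^ t) (g, 0)) (unif ((ZMod n → Fin m) × ZMod n)) ≤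
      (Real.exp 1)⁻¹) :
    (n : ℝ) ^ 2 * Real.log (n * Real.log m) ≤ (n : ℝ) ^ 2 * Real.log 8 + 40 * t := by
  have : NeZero m := ⟨by omega⟩
  have hn0 : (n : ℝ) ≠ 0 := NeZero.ne _
  have hM : 0 < n * Real.log m := by linarith [four_thirds_le_mul_log hn hm]
  have exp_inv_le : (Real.exp 1)⁻¹ ≤ 1 := inv_le_one_of_one_le₀ (Real.one_le_exp zero_le_one)
  have survival : Real.exp (-(2 * Real.pi / n) ^ 2) ^ t * (n * Real.log m) ≤ 8 :=
    (exp_pow_mul_le_of_relEnt_lampChain_cycleWalk_le hn ht).trans (by linarith)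
  have log_survival := Real.log_le_log (by positivity) survival
  rw [Real.log_mul (by positivity) hM.ne', Real.log_pow, Real.log_exp] at log_survival
  have pi_sq_le : Real.pi ^ 2 ≤ 10 := by nlinarith [Real.pi_lt_d2, Real.pi_pos]
  calc (n : ℝ) ^ 2 * Real.log (n * Real.log m)
      ≤ (n : ℝ) ^ 2 * (Real.log 8 + t * (2 * Real.pi / n) ^ 2) := by
        gcongr
        linarith
    _ = (n : ℝ) ^ 2 * Real.log 8 + 4 * Real.pi ^ 2 * t := by
        field_simp
        ring
    _ ≤ (n : ℝ) ^ 2 * Real.log 8 + 40 * t := by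
        gcongr
        linarith

lemma ne_zero_of_relEnt_lampChain_pow_le (hn : 2 ≤ n) (hm : 2 ≤ m) {t : ℕ}
    {p : (ZMod n → Fin m) × ZMod n}
    (ht : relEnt ((lampChain (cycleWalk n) m ^ t) p) (unif ((ZMod n → Fin m) × ZMod n)) ≤
      (Real.exp 1)⁻¹) : t ≠ 0 := by
  rintro rfl
  rw [pow_zero, relEnt_one_row, unif_lamp_apply, mul_inv, inv_inv, inv_pow, inv_inv, ZMod.card,
    Real.log_mul (by positivity) (by positivity), Real.log_pow] at ht
  have exp_inv_le : (Real.exp 1)⁻¹ ≤ 1 := inv_le_one_of_one_le₀ (Real.one_le_exp zero_le_one)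
  linarith [four_thirds_le_mul_log hn hm, Real.log_natCast_nonneg n]

lemma sq_mul_log_le_of_relEnt_le (hn : 2 ≤ n) (hm : 2 ≤ m) {t : ℕ} {g : ZMod n → Fin m}
    (ht : relEnt ((lampChain (cycleWalk n) m ^ t) (g, 0)) (unif ((ZMod n → Fin m) × ZMod n)) ≤
      (Real.exp 1)⁻¹) :
    (n : ℝ) ^ 2 * Real.log (n * Real.log m) ≤ 1000000 * t := by
  rcases le_total (n * Real.log m) 64 with hM | hM
  · have hpos : 0 < n * Real.log m := by linarith [four_thirds_le_mul_log hn hm]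
    have one_le_t : (1 : ℝ) ≤ t :=
      Nat.one_le_cast.2 (Nat.one_le_iff_ne_zero.2 (ne_zero_of_relEnt_lampChain_pow_le hn hm ht))
    have n_le : (n : ℝ) ≤ 96 := by linarith [le_three_halves_mul_log (n := n) hm]
    calc (n : ℝ) ^ 2 * Real.log (n * Real.log m) ≤ (n : ℝ) ^ 2 * 63 := by
          gcongr
          linarith [Real.log_le_sub_one_of_pos hpos]
      _ ≤ (96 : ℝ) ^ 2 * 63 := by gcongr
      _ ≤ 1000000 * (t : ℝ) := by linarith
  · have two_log_le : 2 * Real.log 8 ≤ Real.log (n * Real.log m) := by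
      calc 2 * Real.log 8 = Real.log 64 := by
            rw [← Nat.cast_two (R := ℝ), ← Real.log_pow]
            norm_num
        _ ≤ Real.log (n * Real.log m) := Real.log_le_log (by norm_num) hM
    linarith [sq_mul_log_le_add_of_relEnt_le hn hm ht, Nat.cast_nonneg (α := ℝ) t,
      mul_le_mul_of_nonneg_left two_log_le (sq_nonneg (n : ℝ))]

end LamplighterOnCycle

/-- For the `m`-state lamplighter chain on the cycle `Z_n`,
`τ_ent = Θ(n² (log n + log log m))`: there are absolute constants `c₁, c₂ > 0` with
`c₁ n² log(n log m) ≤ τ_ent ≤ c₂ n² (log n + log log m)`. -/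
theorem lamplighter_cycle_entropy_time :
    ∃ c₁ c₂ : ℝ, 0 < c₁ ∧ 0 < c₂ ∧
      ∀ (n m : ℕ) [NeZero n], 2 ≤ n → 2 ≤ m →
        c₁ * (n : ℝ) ^ 2 * Real.log ((n : ℝ) * Real.log m) ≤
          (tauEnt (lampChain (cycleWalk n) m)
            (unif ((ZMod n → Fin m) × ZMod n)) (Real.exp 1)⁻¹ : ℝ) ∧
        (tauEnt (lampChain (cycleWalk n) m)
            (unif ((ZMod n → Fin m) × ZMod n)) (Real.exp 1)⁻¹ : ℝ) ≤
          c₂ * (n : ℝ) ^ 2 * (Real.log n + Real.log (Real.log m)) := by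
  refine ⟨1 / 1000000, 73, by norm_num, by norm_num, fun n m _ hn hm => ?_⟩
  have : NeZero m := ⟨by omega⟩
  have hn' : (2 : ℝ) ≤ n := by exact_mod_cast hn
  have hlog : 0 < Real.log m := by linarith [two_thirds_le_log hm]
  have mixed (t : ℕ) := relEnt_lampChain_cycleWalk_le hn hm (t := t)
  constructor
  · have := sq_mul_log_le_of_relEnt_le hn hm (relEnt_pow_tauEnt_le mixed (0, 0))
    linarith
  · rw [← Real.log_mul (by positivity) hlog.ne']
    have log_ge := quarter_le_log (four_thirds_le_mul_log hn hm)
    calc _ ≤ (⌈72 * (n : ℝ) ^ 2 * Real.log (n * Real.log m)⌉₊ : ℝ) :=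
          Nat.cast_le.2 (tauEnt_le_ceil mixed)
      _ ≤ 72 * (n : ℝ) ^ 2 * Real.log (n * Real.log m) + 1 :=
          (Nat.ceil_lt_add_one (by positivity)).le
      _ ≤ 73 * (n : ℝ) ^ 2 * Real.log (n * Real.log m) := by nlinarith

end Paper
end
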